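/- arXiv:1810.06680 — 3 statements merged into one kernel-verified Lean document; each statement's English description precedes it below -/
import Mathlib

section
/- (Main theorem on I_α, second weight condition) Let 0<α<mn and q = n/(mn−α). Let u_1,…,u_m and v be weights on ℝ^n and write ν = ∏_{i=1}^m u_i^q. Suppose u_1^{mq},…,u_m^{mq} ∈ A_1 and v^{mq} ∈ A_∞. Then there exists a constant C such that for all f_1,…,f_m, ‖I_α(f⃗)/v‖_{L^{q,∞}(ν v^q)} ≤ C ∏_{i=1}^m ‖f_i‖_{L^1(u_i)}. -/
open MeasureTheory ENNReal Set

noncomputable section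

/-- Euclidean space `ℝ^n`. -/
abbrev ESp (n : ℕ) := EuclideanSpace ℝ (Fin n)

/-- An axis-parallel cube with positive finite side length. -/
def IsCube {n : ℕ} (Q : Set (ESp n)) : Prop :=
  ∃ (c : Fin n → ℝ) (h : ℝ), 0 < h ∧ Q = {x : ESp n | ∀ i, c i ≤ x i ∧ x i ≤ c i + h}

/-- The measure `w(E) = ∫_E w` associated to a weight `w`. -/
def wMeas {n : ℕ} (w : ESp n → ℝ) (E : Set (ESp n)) : ℝ≥0∞ :=
  ∫⁻ x in E, ENNReal.ofReal (w x)

/-- A weight: a nonnegative locally integrable function, positive (and finite) a.e. -/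
def IsWeight {n : ℕ} (w : ESp n → ℝ) : Prop :=
  Measurable w ∧ (∀ x, 0 ≤ w x) ∧ (∀ᵐ x ∂(volume : Measure (ESp n)), 0 < w x) ∧
    ∀ Q : Set (ESp n), IsCube Q → wMeas w Q < ⊤

/-- `C` is an admissible `A₁` constant for `w`. -/
def A1Const {n : ℕ} (w : ESp n → ℝ) (C : ℝ≥0∞) : Prop :=
  ∀ Q : Set (ESp n), IsCube Q →
    (volume Q)⁻¹ * wMeas w Q ≤ C * essInf (fun x => ENNReal.ofReal (w x)) (volume.restrict Q)

/-- The Muckenhoupt class `A₁`. -/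
def IsA1 {n : ℕ} (w : ESp n → ℝ) : Prop := ∃ C : ℝ≥0∞, C < ⊤ ∧ A1Const w C

/-- The Muckenhoupt class `A_p`, `1 < p < ∞`. -/
def IsAp {n : ℕ} (w : ESp n → ℝ) (p : ℝ) : Prop :=
  ∃ C : ℝ≥0∞, C < ⊤ ∧ ∀ Q : Set (ESp n), IsCube Q →
    ((volume Q)⁻¹ * wMeas w Q) *
      ((volume Q)⁻¹ * ∫⁻ x in Q, ENNReal.ofReal (w x) ^ (1 - p / (p - 1))) ^ (p - 1) ≤ C

/-- The class `A_∞ = ⋃_{p ≥ 1} A_p`. -/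
def IsAinfty {n : ℕ} (w : ESp n → ℝ) : Prop :=
  IsA1 w ∨ ∃ p : ℝ, 1 < p ∧ IsAp w p

/-- The Hardy–Littlewood maximal function (over cubes). -/
def maxFn {n : ℕ} (f : ESp n → ℝ) (x : ESp n) : ℝ≥0∞ :=
  ⨆ (Q : Set (ESp n)) (_ : IsCube Q) (_ : x ∈ Q),
    (volume Q)⁻¹ * ∫⁻ y in Q, ENNReal.ofReal |f y|

/-- The Fujii–Wilson `A_∞` constant. -/
def FW {n : ℕ} (w : ESp n → ℝ) : ℝ≥0∞ :=
  ⨆ (Q : Set (ESp n)) (_ : IsCube Q),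
    (wMeas w Q)⁻¹ * ∫⁻ x in Q, maxFn (Q.indicator w) x

/-- The weighted weak `L^{q,∞}(w)` quasinorm of `g`. -/
def wnorm {n : ℕ} (g : ESp n → ℝ≥0∞) (q : ℝ) (w : ESp n → ℝ) : ℝ≥0∞ :=
  ⨆ (t : ℝ) (_ : 0 < t), ENNReal.ofReal t * (wMeas w {x | ENNReal.ofReal t < g x}) ^ (1 / q)

/-- The weighted `L¹(w)` norm. -/
def L1norm {n : ℕ} (f : ESp n → ℝ) (w : ESp n → ℝ) : ℝ≥0∞ :=
  ∫⁻ x, ENNReal.ofReal (|f x| * w x)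

/-- The fractional maximal operator `M_α`. -/
def fracM {n : ℕ} (α : ℝ) (f : ESp n → ℝ) (x : ESp n) : ℝ≥0∞ :=
  ⨆ (Q : Set (ESp n)) (_ : IsCube Q) (_ : x ∈ Q),
    ((volume Q) ^ (1 - α / (n : ℝ)))⁻¹ * ∫⁻ y in Q, ENNReal.ofReal |f y|

/-- The fractional integral (Riesz potential) `I_α`. -/
def fracI {n : ℕ} (α : ℝ) (f : ESp n → ℝ) (x : ESp n) : ℝ :=
  ∫ y, f y / dist x y ^ ((n : ℝ) - α)

/-- The multi(sub)linear maximal function `𝓜`. -/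
def multiM {n m : ℕ} (f : Fin m → ESp n → ℝ) (x : ESp n) : ℝ≥0∞ :=
  ⨆ (Q : Set (ESp n)) (_ : IsCube Q) (_ : x ∈ Q),
    ∏ i, (volume Q)⁻¹ * ∫⁻ y in Q, ENNReal.ofReal |f i y|

/-- The multi(sub)linear fractional maximal operator `𝓜_α`. -/
def multiMα {n m : ℕ} (α : ℝ) (f : Fin m → ESp n → ℝ) (x : ESp n) : ℝ≥0∞ :=
  ⨆ (Q : Set (ESp n)) (_ : IsCube Q) (_ : x ∈ Q),
    ∏ i, ((volume Q) ^ (1 - α / ((m : ℝ) * (n : ℝ))))⁻¹ * ∫⁻ y in Q, ENNReal.ofReal |f i y|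

/-- The multilinear fractional integral `𝓘_α`. -/
def multiIα {n m : ℕ} (α : ℝ) (f : Fin m → ESp n → ℝ) (x : ESp n) : ℝ :=
  ∫ y : Fin m → ESp n, (∏ i, f i (y i)) / (∑ i, dist x (y i)) ^ ((m : ℝ) * (n : ℝ) - α)

/-- The multilinear class `A_{(1,…,1)}`. -/
def A11 {n m : ℕ} (w : Fin m → ESp n → ℝ) : Prop :=
  ∃ C : ℝ≥0∞, C < ⊤ ∧ ∀ Q : Set (ESp n), IsCube Q →
    ((volume Q)⁻¹ * ∫⁻ x in Q, ENNReal.ofReal (∏ i, w i x ^ ((m : ℝ)⁻¹))) ^ (m : ℝ) *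
      ∏ i, (essInf (fun x => ENNReal.ofReal (w i x)) (volume.restrict Q))⁻¹ ≤ C


/-- closed sup-norm balls: volume scaling -/
lemma mfi_vol_ball {n : ℕ} (c : Fin n → ℝ) {R : ℝ} (hR : 0 ≤ R) :
    volume (Metric.closedBall c R) = ENNReal.ofReal (2 * R) ^ n := by
  rw [Real.volume_pi_closedBall c hR, Fintype.card_fin, ENNReal.ofReal_pow (by positivity)]

lemma mfi_vol_ball_mul {n : ℕ} (c c' : Fin n → ℝ) {R K : ℝ} (hR : 0 ≤ R) (hK : 0 ≤ K) :
    volume (Metric.closedBall c (K * R)) = ENNReal.ofReal K ^ n * volume (Metric.closedBall c' R) := by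
  rw [mfi_vol_ball c (by positivity), mfi_vol_ball c' hR, ← mul_pow, ← ENNReal.ofReal_mul hK]
  congr 2; ring

lemma mfi_vol_ball_pos {n : ℕ} (c : Fin n → ℝ) {R : ℝ} (hR : 0 < R) :
    volume (Metric.closedBall c R) ≠ 0 := by
  rw [mfi_vol_ball c hR.le]
  exact pow_ne_zero _ (by simp [hR])

lemma mfi_vol_ball_top {n : ℕ} (c : Fin n → ℝ) {R : ℝ} (hR : 0 < R) :
    volume (Metric.closedBall c R) ≠ ⊤ := by
  rw [mfi_vol_ball c hR.le]
  exact ENNReal.pow_ne_top ENNReal.ofReal_ne_top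

/-- `A₁` condition on balls, without `essInf`. -/
def MfiA1 {n : ℕ} (U : (Fin n → ℝ) → ℝ≥0∞) (C : ℝ≥0∞) : Prop :=
  ∀ (c : Fin n → ℝ) (R : ℝ), 0 < R → ∀ᵐ x ∂(volume.restrict (Metric.closedBall c R)),
    ∫⁻ z in Metric.closedBall c R, U z ≤ C * volume (Metric.closedBall c R) * U x

lemma MfiA1.doubling {n : ℕ} {U : (Fin n → ℝ) → ℝ≥0∞} {C : ℝ≥0∞} (h : MfiA1 U C)
    (hC : C ≠ ⊤) (c : Fin n → ℝ) {R : ℝ} (hR : 0 < R) :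
    ∫⁻ z in Metric.closedBall c (5 * R), U z ≤ C * 5 ^ n * ∫⁻ z in Metric.closedBall c R, U z := by
  have h1 := h c (5 * R) (by positivity)
  have hsub : Metric.closedBall c R ⊆ Metric.closedBall c (5 * R) :=
    Metric.closedBall_subset_closedBall (by linarith)
  have h2 := ae_mono (Measure.restrict_mono hsub le_rfl) h1
  have h3 := lintegral_mono_ae h2
  rw [lintegral_const, Measure.restrict_apply_univ] at h3
  have hv0 := mfi_vol_ball_pos c hR
  have hvt := mfi_vol_ball_top c hR
  have h4 : ∫⁻ a in Metric.closedBall c R, C * volume (Metric.closedBall c (5 * R)) * U a ≤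
      (C * 5 ^ n * ∫⁻ z in Metric.closedBall c R, U z) * volume (Metric.closedBall c R) := by
    rw [lintegral_const_mul' _ _ (by
      refine ENNReal.mul_ne_top hC (mfi_vol_ball_top c (by positivity))), 
      mfi_vol_ball_mul c c hR.le (by norm_num)]
    apply le_of_eq
    rw [show ENNReal.ofReal 5 = 5 by simp]
    ring
  have h5 := h3.trans h4
  exact (ENNReal.mul_le_mul_iff_left hv0 hvt).1 h5


lemma mfi_select {n : ℕ} {U : (Fin n → ℝ) → ℝ≥0∞} (hU : Measurable U)
    (c : Fin n → ℝ) {R : ℝ} (hR : 0 < R) {l : ℝ≥0∞} (hlt : l ≠ ⊤)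
    (hl : ∫⁻ z in Metric.closedBall c R, U z ≤ l * volume (Metric.closedBall c R)) :
    ∀ᵐ x, x ∈ Metric.closedBall c R → l < U x → ∃ (w : Fin n → ℝ) (d : ℝ), 0 < d ∧ d ≤ R ∧
      x ∈ Metric.closedBall w d ∧ Metric.closedBall w d ⊆ Metric.closedBall c R ∧
      l * volume (Metric.closedBall w d) < ∫⁻ z in Metric.closedBall w d, U z ∧
      ∫⁻ z in Metric.closedBall w d, U z ≤ 2 ^ n * l * volume (Metric.closedBall w d) := by
  set Q := Metric.closedBall c R with hQ
  have hQm : MeasurableSet Q := measurableSet_closedBall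
  have hfin : ∫⁻ y, Q.indicator U y ≠ ⊤ := by
    rw [lintegral_indicator hQm]
    exact ne_top_of_le_ne_top (ENNReal.mul_ne_top hlt (mfi_vol_ball_top c hR)) hl
  filter_upwards [VitaliFamily.ae_tendsto_lintegral_div
    (IsUnifLocDoublingMeasure.vitaliFamily (volume : Measure (Fin n → ℝ)) 1)
    (hU.indicator hQm).aemeasurable hfin] with x hx hxQ hxl
  set w : ℕ → (Fin n → ℝ) := fun j => x + ((1/2 : ℝ) ^ j) • (c - x) with hw
  set d : ℕ → ℝ := fun j => (1/2 : ℝ) ^ j * R with hd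
  have hxc : ‖c - x‖ ≤ R := by
    rw [← dist_eq_norm, dist_comm]; exact hxQ
  have hd0 : ∀ j, 0 < d j := fun j => by positivity
  have hxm : ∀ j, x ∈ Metric.closedBall (w j) (d j) := by
    intro j
    rw [Metric.mem_closedBall, dist_eq_norm]
    simp only [hw, hd]
    rw [sub_add_cancel_left, norm_neg, norm_smul, Real.norm_of_nonneg (by positivity)]
    gcongr
  have hstep : ∀ j, Metric.closedBall (w (j+1)) (d (j+1)) ⊆ Metric.closedBall (w j) (d j) := by
    intro j
    apply Metric.closedBall_subset_closedBall'
    have : w (j+1) - w j = -(((1/2:ℝ)^(j+1)) • (c - x)) := by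
      simp only [hw]
      rw [pow_succ]
      module
    rw [dist_eq_norm, this, norm_neg, norm_smul, Real.norm_of_nonneg (by positivity)]
    simp only [hd]
    have : (1/2:ℝ)^(j+1) * ‖c - x‖ ≤ (1/2:ℝ)^(j+1) * R := by gcongr
    rw [pow_succ] at *
    linarith
  have h0 : Metric.closedBall (w 0) (d 0) = Q := by simp [hw, hd, hQ]
  have hanti : Antitone fun j => Metric.closedBall (w j) (d j) := antitone_nat_of_succ_le hstep
  have hsub : ∀ j, Metric.closedBall (w j) (d j) ⊆ Q := fun j => by
    rw [← h0]; exact hanti (Nat.zero_le j)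
  have hdt : Filter.Tendsto d Filter.atTop (nhdsWithin 0 (Ioi 0)) := by
    rw [tendsto_nhdsWithin_iff]
    refine ⟨?_, Filter.Eventually.of_forall hd0⟩
    have := (tendsto_pow_atTop_nhds_zero_of_lt_one (r := (1/2:ℝ)) (by norm_num) (by norm_num)).mul_const R
    rw [zero_mul] at this
    exact this
  have ht := hx.comp (IsUnifLocDoublingMeasure.tendsto_closedBall_filterAt (volume : Measure (Fin n → ℝ))
    (K := 1) (x := x) w d hdt (Filter.Eventually.of_forall fun j => by simpa using hxm j))
  rw [indicator_of_mem hxQ] at ht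
  have hav : ∃ j, l * volume (Metric.closedBall (w j) (d j)) <
      ∫⁻ z in Metric.closedBall (w j) (d j), U z := by
    obtain ⟨j, hj⟩ := (ht.eventually (lt_mem_nhds hxl)).exists
    refine ⟨j, ?_⟩
    simp only [Function.comp] at hj
    rw [ENNReal.lt_div_iff_mul_lt (Or.inl (mfi_vol_ball_pos _ (hd0 j)))
      (Or.inl (mfi_vol_ball_top _ (hd0 j)))] at hj
    refine hj.trans_le (lintegral_mono fun z => indicator_le_self _ _ _)
  classical
  set j := Nat.find hav with hj
  have hjs := Nat.find_spec hav
  rw [← hj] at hjs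
  have hj0 : j ≠ 0 := by
    intro h
    rw [h, h0] at hjs
    exact absurd hjs (not_lt.2 hl)
  obtain ⟨i, hi⟩ := Nat.exists_eq_succ_of_ne_zero hj0
  have hmin := Nat.find_min hav (m := i) (by omega)
  rw [not_lt] at hmin
  refine ⟨w j, d j, hd0 j, ?_, hxm j, hsub j, hjs, ?_⟩
  · simp only [hd]
    have : (1/2:ℝ)^j ≤ 1 := pow_le_one₀ (by norm_num) (by norm_num)
    nlinarith
  · have hle : ∫⁻ z in Metric.closedBall (w j) (d j), U z ≤
        ∫⁻ z in Metric.closedBall (w i) (d i), U z := by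
      rw [hi]
      exact lintegral_mono_set (hstep i)
    refine hle.trans (hmin.trans (le_of_eq ?_))
    have : d i = 2 * d j := by
      rw [hi]; simp only [hd, Nat.succ_eq_add_one, pow_succ]; ring
    rw [this, mfi_vol_ball_mul (w i) (w j) (hd0 j).le (by norm_num)]
    rw [show ENNReal.ofReal 2 = 2 by simp]
    ring

lemma MfiA1.level {n : ℕ} {U : (Fin n → ℝ) → ℝ≥0∞} (hU : Measurable U) {C : ℝ≥0∞}
    (h : MfiA1 U C) (hC : C ≠ ⊤)
    (c : Fin n → ℝ) {R : ℝ} (hR : 0 < R) {l : ℝ≥0∞} (hlt : l ≠ ⊤)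
    (hl : ∫⁻ z in Metric.closedBall c R, U z ≤ l * volume (Metric.closedBall c R)) :
    ∫⁻ z in Metric.closedBall c R ∩ {x | l < U x}, U z ≤
      C * 5 ^ n * 2 ^ n * l * volume (Metric.closedBall c R ∩ {x | l < C * U x}) := by
  have hsel := mfi_select hU c hR hlt hl
  set Q := Metric.closedBall c R with hQ
  set G : Set (Fin n → ℝ) := {x | ∃ (w : Fin n → ℝ) (d : ℝ), 0 < d ∧ d ≤ R ∧
      x ∈ Metric.closedBall w d ∧ Metric.closedBall w d ⊆ Q ∧
      l * volume (Metric.closedBall w d) < ∫⁻ z in Metric.closedBall w d, U z ∧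
      ∫⁻ z in Metric.closedBall w d, U z ≤ 2 ^ n * l * volume (Metric.closedBall w d)} with hG
  have hch : ∀ x : (Fin n → ℝ), ∃ (w : Fin n → ℝ) (d : ℝ), x ∈ G → (0 < d ∧ d ≤ R ∧
      x ∈ Metric.closedBall w d ∧ Metric.closedBall w d ⊆ Q ∧
      l * volume (Metric.closedBall w d) < ∫⁻ z in Metric.closedBall w d, U z ∧
      ∫⁻ z in Metric.closedBall w d, U z ≤ 2 ^ n * l * volume (Metric.closedBall w d)) := by
    intro x
    by_cases hx : x ∈ G
    · obtain ⟨w, d, hwd⟩ := hx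
      exact ⟨w, d, fun _ => hwd⟩
    · exact ⟨x, 0, fun h => absurd h hx⟩
  choose w d hwd using hch
  obtain ⟨u, huG, hdisj, hcov⟩ := Vitali.exists_disjoint_subfamily_covering_enlargement_closedBall
    G w d R (fun a ha => (hwd a ha).2.1) 5 (by norm_num)
  have hcount : u.Countable := by
    refine hdisj.countable_of_nonempty_interior fun i hi => ?_
    refine ⟨w i, ?_⟩
    exact Metric.ball_subset_interior_closedBall (Metric.mem_ball_self (hwd i (huG hi)).1)
  have := hcount.to_subtype
  have hsub : (Q ∩ {x | l < U x} : Set _) ≤ᵐ[volume]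
      (⋃ b : u, Metric.closedBall (w b) (5 * d b) : Set _) := by
    filter_upwards [hsel] with x hx hx2
    have hxG : x ∈ G := hx hx2.1 hx2.2
    obtain ⟨b, hb, hb2⟩ := hcov x hxG
    exact mem_iUnion.2 ⟨⟨b, hb⟩, hb2 (hwd x hxG).2.2.1⟩
  calc ∫⁻ z in Q ∩ {x | l < U x}, U z
      ≤ ∫⁻ z in ⋃ b : u, Metric.closedBall (w b) (5 * d b), U z := lintegral_mono_set' hsub
    _ ≤ ∑' b : u, ∫⁻ z in Metric.closedBall (w b) (5 * d b), U z := lintegral_iUnion_le _ _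
    _ ≤ ∑' b : u, C * 5 ^ n * 2 ^ n * l * volume (Metric.closedBall (w b) (d b)) := by
        refine ENNReal.tsum_le_tsum fun b => ?_
        have hb := hwd b (huG b.2)
        refine (h.doubling hC (w b) hb.1).trans ?_
        refine (mul_le_mul_right hb.2.2.2.2.2 _).trans (le_of_eq ?_)
        ring
    _ = C * 5 ^ n * 2 ^ n * l * ∑' b : u, volume (Metric.closedBall (w b) (d b)) :=
        ENNReal.tsum_mul_left
    _ = C * 5 ^ n * 2 ^ n * l * volume (⋃ b ∈ u, Metric.closedBall (w b) (d b)) := by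
        rw [measure_biUnion hcount hdisj (fun b _ => measurableSet_closedBall)]
    _ ≤ _ := by
        refine mul_le_mul_right ?_ _
        refine measure_mono_ae ?_
        have hall : ∀ᵐ x, ∀ b ∈ u, x ∈ Metric.closedBall (w b) (d b) → l < C * U x := by
          rw [ae_ball_iff hcount]
          intro b hb
          have hb' := hwd b (huG hb)
          have := h (w b) (d b) hb'.1
          rw [ae_restrict_iff' measurableSet_closedBall] at this
          filter_upwards [this] with x hx hxb
          have h2 := hb'.2.2.2.2.1.trans_le (hx hxb)
          rw [mul_right_comm] at h2
          exact lt_of_mul_lt_mul_right h2 (by simp)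
        filter_upwards [hall] with x hx hx2
        obtain ⟨b, hb, hb2⟩ := mem_iUnion₂.1 hx2
        exact ⟨(hwd b (huG hb)).2.2.2.1 hb2, hx b hb hb2⟩

lemma mfi_RH_bdd {n : ℕ} {U : (Fin n → ℝ) → ℝ≥0∞} (hU : Measurable U) {C : ℝ≥0∞}
    (h : MfiA1 U C) (hC : C ≠ ⊤) {N : ℝ≥0∞} (hN : N ≠ ⊤) (hUN : ∀ x, U x ≤ N)
    {e : ℝ} (he : 0 < e) (hK : ENNReal.ofReal e * (C * 5 ^ n * 2 ^ n * C ^ (1 + e)) ≤ 1 / 2)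
    (c : Fin n → ℝ) {R : ℝ} (hR : 0 < R) :
    ∫⁻ z in Metric.closedBall c R, U z ^ (1 + e) ≤
      2 * (((∫⁻ z in Metric.closedBall c R, U z) / volume (Metric.closedBall c R)) ^ e *
        ∫⁻ z in Metric.closedBall c R, U z) := by
  set Q := Metric.closedBall c R with hQ
  have hv0 : volume Q ≠ 0 := mfi_vol_ball_pos c hR
  have hvt : volume Q ≠ ⊤ := mfi_vol_ball_top c hR
  have hQm : MeasurableSet Q := measurableSet_closedBall
  have hUt : ∀ x, U x ≠ ⊤ := fun x => ne_top_of_le_ne_top hN (hUN x)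
  have hIt : ∫⁻ z in Q, U z ≠ ⊤ := by
    refine ne_top_of_le_ne_top (ENNReal.mul_ne_top hN hvt) ?_
    calc ∫⁻ z in Q, U z ≤ ∫⁻ z in Q, N := lintegral_mono fun z => hUN z
      _ = N * volume Q := by simp
  set a := (∫⁻ z in Q, U z) / volume Q with ha
  have hat : a ≠ ⊤ := ENNReal.div_ne_top hIt hv0
  set f : (Fin n → ℝ) → ℝ := fun x => (U x).toReal with hf
  have hfm : Measurable f := hU.ennreal_toReal
  have hfU : ∀ x, ENNReal.ofReal (f x) = U x := fun x => ENNReal.ofReal_toReal (hUt x)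
  have hf0 : ∀ x, 0 ≤ f x := fun x => ENNReal.toReal_nonneg
  have hfp : ∀ x (p : ℝ), 0 ≤ p → ENNReal.ofReal (f x ^ p) = U x ^ p := fun x p hp => by
    rw [← ENNReal.ofReal_rpow_of_nonneg (hf0 x) hp, hfU]
  set μ : Measure (Fin n → ℝ) := (volume.restrict Q).withDensity U with hμ
  set I := ∫⁻ z in Q, U z ^ (1 + e) with hI
  have hμI : I = ∫⁻ z, ENNReal.ofReal (f z ^ e) ∂μ := by
    rw [hμ, lintegral_withDensity_eq_lintegral_mul _ hU (by fun_prop)]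
    refine lintegral_congr fun z => ?_
    simp only [Pi.mul_apply]
    rw [hfp z e he.le, ENNReal.rpow_add_of_nonneg _ _ zero_le_one he.le, ENNReal.rpow_one]
  have hIfin : I ≠ ⊤ := by
    refine ne_top_of_le_ne_top (ENNReal.mul_ne_top (ENNReal.rpow_ne_top_of_nonneg
      (y := 1 + e) (by positivity) hN) hvt) ?_
    calc I ≤ ∫⁻ z in Q, N ^ (1 + e) := lintegral_mono fun z => by
            gcongr; exact hUN z
      _ = N ^ (1 + e) * volume Q := by simp
  have hlay := lintegral_rpow_eq_lintegral_meas_lt_mul μ (f := f) (Filter.Eventually.of_forall hf0)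
    hfm.aemeasurable he
  have hlayc := lintegral_rpow_eq_lintegral_meas_lt_mul μ (f := fun _ => a.toReal)
    (Filter.Eventually.of_forall fun _ => ENNReal.toReal_nonneg) aemeasurable_const he
  have hlay2 := lintegral_rpow_eq_lintegral_meas_lt_mul (volume.restrict Q)
    (f := fun x => C.toReal * f x)
    (Filter.Eventually.of_forall fun x => mul_nonneg ENNReal.toReal_nonneg (hf0 x))
    (by fun_prop) (p := 1 + e) (by positivity)
  set D := C * 5 ^ n * 2 ^ n with hD
  have hpt : ∀ t ∈ Ioi (0:ℝ), μ {x | t < f x} * ENNReal.ofReal (t ^ (e - 1)) ≤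
      μ {_x | t < a.toReal} * ENNReal.ofReal (t ^ (e - 1)) +
      D * ((volume.restrict Q) {x | t < C.toReal * f x} * ENNReal.ofReal (t ^ (1 + e - 1))) := by
    intro t ht
    have ht : 0 < t := ht
    by_cases hta : t < a.toReal
    · refine le_add_right ?_
      refine mul_le_mul_left (measure_mono fun x _ => ?_) _
      exact hta
    · refine le_add_left ?_
      push Not at hta
      have hta' : a ≤ ENNReal.ofReal t := by
        rw [← ENNReal.ofReal_toReal hat]
        exact ENNReal.ofReal_le_ofReal hta
      have hlev := h.level hU hC c hR (l := ENNReal.ofReal t) ENNReal.ofReal_ne_top (by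
        rw [← ENNReal.div_le_iff hv0 hvt]; exact hta')
      rw [← hQ, ← hD] at hlev
      have e1 : μ {x | t < f x} = ∫⁻ z in Q ∩ {x | ENNReal.ofReal t < U x}, U z := by
        have hs : {x | t < f x} = {x | ENNReal.ofReal t < U x} := by
          ext x
          simp only [mem_ofPred_eq]
          rw [← hfU x, ENNReal.ofReal_lt_ofReal_iff_of_nonneg ht.le]
        rw [hs, hμ, withDensity_apply _ (measurableSet_lt measurable_const hU),
          Measure.restrict_restrict (measurableSet_lt measurable_const hU), inter_comm]
      have e2 : (volume.restrict Q) {x | t < C.toReal * f x} =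
          volume (Q ∩ {x | ENNReal.ofReal t < C * U x}) := by
        have hs : {x | t < C.toReal * f x} = {x | ENNReal.ofReal t < C * U x} := by
          ext x
          simp only [mem_ofPred_eq]
          rw [← hfU x, ← ENNReal.ofReal_toReal hC, ← ENNReal.ofReal_mul ENNReal.toReal_nonneg,
            ENNReal.ofReal_lt_ofReal_iff_of_nonneg ht.le, ENNReal.toReal_ofReal ENNReal.toReal_nonneg]
        rw [hs, Measure.restrict_apply (measurableSet_lt measurable_const (hU.const_mul C)),
          inter_comm]
      rw [e1, e2]
      refine (mul_le_mul_left hlev _).trans (le_of_eq ?_)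
      have : ENNReal.ofReal (t ^ (1 + e - 1)) = ENNReal.ofReal t * ENNReal.ofReal (t ^ (e - 1)) := by
        rw [← ENNReal.ofReal_mul ht.le]
        congr 1
        rw [show 1 + e - 1 = 1 + (e - 1) by ring, Real.rpow_add ht, Real.rpow_one]
      rw [this]
      ring
  have hDt : D ≠ ⊤ := by
    refine ENNReal.mul_ne_top (ENNReal.mul_ne_top hC ?_) ?_ <;> exact ENNReal.pow_ne_top (by simp)
  have hmain : I ≤ a ^ e * (∫⁻ z in Q, U z) + 1 / 2 * I := by
    calc I = ENNReal.ofReal e * ∫⁻ t in Ioi (0:ℝ), μ {x | t < f x} * ENNReal.ofReal (t ^ (e - 1)) := by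
          rw [hμI, hlay]
      _ ≤ ENNReal.ofReal e * ∫⁻ t in Ioi (0:ℝ), (μ {_x | t < a.toReal} * ENNReal.ofReal (t ^ (e - 1)) +
          D * ((volume.restrict Q) {x | t < C.toReal * f x} * ENNReal.ofReal (t ^ (1 + e - 1)))) := by
          refine mul_le_mul_right ?_ _
          exact setLIntegral_mono' measurableSet_Ioi hpt
      _ = ENNReal.ofReal e * (∫⁻ t in Ioi (0:ℝ), μ {_x | t < a.toReal} * ENNReal.ofReal (t ^ (e - 1))) +
          ENNReal.ofReal e * (D * ∫⁻ t in Ioi (0:ℝ), (volume.restrict Q) {x | t < C.toReal * f x} *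
            ENNReal.ofReal (t ^ (1 + e - 1))) := by
          rw [lintegral_add_left, mul_add, lintegral_const_mul' _ _ hDt]
          refine Measurable.mul ?_ (by fun_prop)
          refine Antitone.measurable fun s t hst => measure_mono fun x hx => lt_of_le_of_lt hst hx
      _ ≤ a ^ e * (∫⁻ z in Q, U z) + 1 / 2 * I := by
          refine add_le_add ?_ ?_
          · rw [← hlayc, lintegral_const, hμ, withDensity_apply _ MeasurableSet.univ,
              Measure.restrict_univ, ← ENNReal.ofReal_rpow_of_nonneg ENNReal.toReal_nonneg he.le,
              ENNReal.ofReal_toReal hat]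
          · calc _ ≤ ENNReal.ofReal e * (D * (ENNReal.ofReal (1 + e) *
                    ∫⁻ t in Ioi (0:ℝ), (volume.restrict Q) {x | t < C.toReal * f x} *
                    ENNReal.ofReal (t ^ (1 + e - 1)))) := by
                  gcongr
                  refine le_mul_of_one_le_left (by simp) ?_
                  rw [← ENNReal.ofReal_one]
                  exact ENNReal.ofReal_le_ofReal (by linarith)
              _ = ENNReal.ofReal e * (D * C ^ (1 + e)) * I := by
                  rw [← hlay2, hI]
                  have : ∀ x, ENNReal.ofReal ((C.toReal * f x) ^ (1 + e)) = C ^ (1 + e) * U x ^ (1 + e) := by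
                    intro x
                    rw [Real.mul_rpow ENNReal.toReal_nonneg (hf0 x), ENNReal.ofReal_mul (by positivity),
                      hfp _ _ (by positivity), ← ENNReal.ofReal_rpow_of_nonneg ENNReal.toReal_nonneg
                      (by positivity), ENNReal.ofReal_toReal hC]
                  simp_rw [this]
                  rw [lintegral_const_mul _ (by fun_prop)]
                  ring
              _ ≤ _ := by gcongr
  have h2 : I / 2 + I / 2 ≤ a ^ e * (∫⁻ z in Q, U z) + I / 2 := by
    rw [ENNReal.add_halves]
    refine hmain.trans (le_of_eq ?_)
    rw [one_div, mul_comm 2⁻¹ I, div_eq_mul_inv]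
  have h3 := (ENNReal.add_le_add_iff_right (ENNReal.div_ne_top hIfin two_ne_zero)).1 h2
  rw [ENNReal.div_le_iff (by simp) (by simp)] at h3
  rw [mul_comm 2]
  exact h3

lemma MfiA1.min_const {n : ℕ} {U : (Fin n → ℝ) → ℝ≥0∞} {C : ℝ≥0∞} (h : MfiA1 U C) (hC : 1 ≤ C)
    (N : ℝ≥0∞) : MfiA1 (fun x => min (U x) N) C := by
  intro c R hR
  filter_upwards [h c R hR] with x hx
  rcases le_total (U x) N with h1 | h1
  · rw [min_eq_left h1]
    exact (lintegral_mono fun z => min_le_left _ _).trans hx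
  · rw [min_eq_right h1]
    calc ∫⁻ z in Metric.closedBall c R, min (U z) N ≤ ∫⁻ z in Metric.closedBall c R, N :=
          lintegral_mono fun z => min_le_right _ _
      _ = 1 * volume (Metric.closedBall c R) * N := by simp [mul_comm]
      _ ≤ _ := by gcongr

/-- reverse Hölder inequality for `A₁` weights -/
lemma mfi_RH {n : ℕ} {U : (Fin n → ℝ) → ℝ≥0∞} (hU : Measurable U) {C : ℝ≥0∞}
    (h : MfiA1 U C) (hC : C ≠ ⊤) (hC1 : 1 ≤ C) (hUt : ∀ x, U x ≠ ⊤) :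
    ∃ e : ℝ, 0 < e ∧ ∀ (c : Fin n → ℝ) (R : ℝ), 0 < R →
    ∫⁻ z in Metric.closedBall c R, U z ^ (1 + e) ≤
      2 * (((∫⁻ z in Metric.closedBall c R, U z) / volume (Metric.closedBall c R)) ^ e *
        ∫⁻ z in Metric.closedBall c R, U z) := by
  set K := (C * 5 ^ n * 2 ^ n * C ^ (2:ℝ)) with hK
  have hKt : K ≠ ⊤ := by
    refine ENNReal.mul_ne_top (ENNReal.mul_ne_top (ENNReal.mul_ne_top hC ?_) ?_) ?_
    · exact ENNReal.pow_ne_top (by simp)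
    · exact ENNReal.pow_ne_top (by simp)
    · exact ENNReal.rpow_ne_top_of_nonneg (by norm_num) hC
  set e : ℝ := min 1 (1 / (2 * (K.toReal + 1))) with he
  have hKr : 0 ≤ K.toReal := ENNReal.toReal_nonneg
  have he0 : 0 < e := by positivity
  have he1 : e ≤ 1 := min_le_left _ _
  have heK : e * K.toReal ≤ 1 / 2 := by
    have : e ≤ 1 / (2 * (K.toReal + 1)) := min_le_right _ _
    calc e * K.toReal ≤ 1 / (2 * (K.toReal + 1)) * K.toReal := by gcongr
      _ ≤ 1/2 := by
        rw [div_mul_eq_mul_div, div_le_div_iff₀ (by positivity) (by norm_num)]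
        nlinarith
  have hK' : ENNReal.ofReal e * (C * 5 ^ n * 2 ^ n * C ^ (1 + e)) ≤ 1 / 2 := by
    calc _ ≤ ENNReal.ofReal e * K := by
          rw [hK]
          gcongr
          · linarith
      _ = ENNReal.ofReal (e * K.toReal) := by
          rw [ENNReal.ofReal_mul he0.le, ENNReal.ofReal_toReal hKt]
      _ ≤ ENNReal.ofReal (1/2) := ENNReal.ofReal_le_ofReal heK
      _ = 1/2 := by rw [ENNReal.ofReal_div_of_pos (by norm_num)]; simp
  refine ⟨e, he0, fun c R hR => ?_⟩
  have hmono : ∀ z, Monotone fun N : ℕ => (min (U z) (N : ℝ≥0∞)) ^ (1 + e) := by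
    intro z N M hNM
    simp only
    gcongr
  have hsup : ∀ z, U z ^ (1 + e) ≤ ⨆ N : ℕ, (min (U z) (N : ℝ≥0∞)) ^ (1 + e) := by
    intro z
    obtain ⟨N, hN⟩ := ENNReal.exists_nat_gt (hUt z)
    refine le_iSup_of_le N ?_
    rw [min_eq_left hN.le]
  calc ∫⁻ z in Metric.closedBall c R, U z ^ (1 + e)
      ≤ ∫⁻ z in Metric.closedBall c R, ⨆ N : ℕ, (min (U z) (N : ℝ≥0∞)) ^ (1 + e) :=
        lintegral_mono hsup
    _ = ⨆ N : ℕ, ∫⁻ z in Metric.closedBall c R, (min (U z) (N : ℝ≥0∞)) ^ (1 + e) := by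
        rw [lintegral_iSup (fun N => by fun_prop)]
        exact fun N M hNM z => hmono z hNM
    _ ≤ _ := by
        refine iSup_le fun N => ?_
        refine (mfi_RH_bdd (hU.min measurable_const) (h.min_const hC1 N) hC
          (ENNReal.natCast_ne_top N) (fun x => min_le_right _ _) he0 hK' c hR).trans ?_
        gcongr <;> exact min_le_left _ _

/-- normalised Lebesgue measure on a ball -/
noncomputable def mfiAvg {n : ℕ} (c : Fin n → ℝ) (R : ℝ) : Measure (Fin n → ℝ) :=
  (volume (Metric.closedBall c R))⁻¹ • volume.restrict (Metric.closedBall c R)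

lemma mfiAvg_prob {n : ℕ} (c : Fin n → ℝ) {R : ℝ} (hR : 0 < R) :
    IsProbabilityMeasure (mfiAvg c R) := by
  constructor
  simp only [mfiAvg, Measure.smul_apply, Measure.restrict_apply_univ, smul_eq_mul]
  exact ENNReal.inv_mul_cancel (mfi_vol_ball_pos c hR) (mfi_vol_ball_top c hR)

lemma mfiAvg_lintegral {n : ℕ} (c : Fin n → ℝ) (R : ℝ) (f : (Fin n → ℝ) → ℝ≥0∞) :
    ∫⁻ x, f x ∂(mfiAvg c R) = (volume (Metric.closedBall c R))⁻¹ * ∫⁻ x in Metric.closedBall c R, f x := by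
  simp [mfiAvg, lintegral_smul_measure]

lemma mfiAvg_lintegral' {n : ℕ} (c : Fin n → ℝ) {R : ℝ} (hR : 0 < R) (f : (Fin n → ℝ) → ℝ≥0∞) :
    ∫⁻ x in Metric.closedBall c R, f x = volume (Metric.closedBall c R) * ∫⁻ x, f x ∂(mfiAvg c R) := by
  rw [mfiAvg_lintegral, ← mul_assoc, ENNReal.mul_inv_cancel (mfi_vol_ball_pos c hR)
    (mfi_vol_ball_top c hR), one_mul]

/-- `A_∞` condition in the `A_p` form with `δ = 1/(p-1)` -/
def MfiAinf {n : ℕ} (W : (Fin n → ℝ) → ℝ≥0∞) (δ : ℝ) (C : ℝ≥0∞) : Prop :=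
  ∀ (c : Fin n → ℝ) (R : ℝ), 0 < R →
    (∫⁻ x, W x ∂(mfiAvg c R)) * (∫⁻ x, W x ^ (-δ) ∂(mfiAvg c R)) ^ (1 / δ) ≤ C

lemma mfi_jensen {α : Type*} [MeasurableSpace α] (μ : Measure α) [IsProbabilityMeasure μ]
    {f : α → ℝ≥0∞} (hf : AEMeasurable f μ) {a : ℝ} (ha : 0 ≤ a) (ha1 : a ≤ 1) :
    ∫⁻ x, f x ^ a ∂μ ≤ (∫⁻ x, f x ∂μ) ^ a := by
  have := ENNReal.lintegral_mul_norm_pow_le hf (aemeasurable_const (b := (1:ℝ≥0∞)))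
    ha (sub_nonneg.2 ha1) (by ring)
  simpa using this

lemma mfi_lint_pos {α : Type*} [MeasurableSpace α] (μ : Measure α) [IsProbabilityMeasure μ]
    {f : α → ℝ≥0∞} (hf : Measurable f) (h0 : ∀ x, f x ≠ 0) : ∫⁻ x, f x ∂μ ≠ 0 := by
  rw [Ne, lintegral_eq_zero_iff hf]
  intro h
  have : ∀ᵐ x ∂μ, False := h.mono fun x hx => h0 x hx
  simp at this
  exact IsProbabilityMeasure.ne_zero μ this

/-- basic facts for a probability measure -/
lemma mfi_ainf_facts {α : Type*} [MeasurableSpace α] (μ : Measure α) [IsProbabilityMeasure μ]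
    {W : α → ℝ≥0∞} (hW : Measurable W) (h0 : ∀ x, W x ≠ 0) (ht : ∀ x, W x ≠ ⊤) {δ : ℝ} (hδ : 0 < δ)
    {C : ℝ≥0∞} (hC : C ≠ ⊤) (h : (∫⁻ x, W x ∂μ) * (∫⁻ x, W x ^ (-δ) ∂μ) ^ (1 / δ) ≤ C) :
    ∫⁻ x, W x ∂μ ≠ 0 ∧ ∫⁻ x, W x ∂μ ≠ ⊤ ∧ 
      ∫⁻ x, W x ^ (-δ) ∂μ ≤ C ^ δ * (∫⁻ x, W x ∂μ) ^ (-δ) := by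
  have h1 := mfi_lint_pos μ hW h0
  have h2 : ∫⁻ x, W x ^ (-δ) ∂μ ≠ 0 := mfi_lint_pos μ (by fun_prop) fun x => by
    rw [Ne, ENNReal.rpow_eq_zero_iff]
    push Not
    exact ⟨fun h => absurd h (h0 x), fun h => absurd h (ht x)⟩
  have h3 : ∫⁻ x, W x ∂μ ≠ ⊤ := by
    intro h4
    rw [h4, ENNReal.top_mul] at h
    · exact hC (top_le_iff.1 h)
    · rw [Ne, ENNReal.rpow_eq_zero_iff]
      push Not
      exact ⟨fun h => absurd h h2, fun _ => by positivity⟩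
  refine ⟨h1, h3, ?_⟩
  have h5 := ENNReal.rpow_le_rpow h hδ.le
  rw [ENNReal.mul_rpow_of_nonneg _ _ hδ.le, ← ENNReal.rpow_mul, one_div_mul_cancel hδ.ne',
    ENNReal.rpow_one, mul_comm, ] at h5
  rw [ENNReal.rpow_neg, ← div_eq_mul_inv, ENNReal.le_div_iff_mul_le]
  · exact h5
  · left
    rw [Ne, ENNReal.rpow_eq_zero_iff]
    push Not
    exact ⟨fun h => absurd h h1, fun h => absurd h h3⟩
  · left
    exact ENNReal.rpow_ne_top_of_nonneg hδ.le h3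

lemma mfi_growth {n : ℕ} (hn : 0 < n) {W : (Fin n → ℝ) → ℝ≥0∞} (hW : Measurable W)
    (h0 : ∀ x, W x ≠ 0) (ht : ∀ x, W x ≠ ⊤) {δ : ℝ} (hδ : 0 < δ)
    {C : ℝ≥0∞} (hC : C ≠ ⊤) (hC1 : 1 ≤ C) (h : MfiAinf W δ C) :
    ∃ κ : ℝ≥0∞, κ < 1 ∧ ∀ (c : Fin n → ℝ) (R : ℝ), 0 < R →
      ∫⁻ x in Metric.closedBall c R, W x ≤ κ * ∫⁻ x in Metric.closedBall c (2 * R), W x := by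
  set θ : ℝ≥0∞ := (1/2) ^ ((1 + δ) / δ) / C with hθ
  have hθ0 : θ ≠ 0 := by
    refine (ENNReal.div_pos ?_ hC).ne'
    rw [Ne, ENNReal.rpow_eq_zero_iff]
    simp
  refine ⟨1 - θ, ENNReal.sub_lt_self one_ne_top one_ne_zero hθ0, fun c R hR => ?_⟩
  have h2R : 0 < 2 * R := by positivity
  have := mfiAvg_prob c h2R
  set μ := mfiAvg c (2 * R) with hμ
  obtain ⟨f1, f2, f3⟩ := mfi_ainf_facts μ hW h0 ht hδ hC (h c _ h2R)
  set B := Metric.closedBall c R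
  have hBm : MeasurableSet B := measurableSet_closedBall
  have hsub : B ⊆ Metric.closedBall c (2 * R) := Metric.closedBall_subset_closedBall (by linarith)
  have hμB : μ B ≤ 1 / 2 := by
    rw [hμ, mfiAvg, Measure.smul_apply, Measure.restrict_apply hBm, inter_eq_left.2 hsub, smul_eq_mul,
      mfi_vol_ball_mul c c hR.le (by norm_num), ENNReal.mul_inv (Or.inr (mfi_vol_ball_top c hR))
      (Or.inr (mfi_vol_ball_pos c hR)), mul_assoc, ENNReal.inv_mul_cancel (mfi_vol_ball_pos c hR)
    (mfi_vol_ball_top c hR), mul_one, one_div]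
    rw [ENNReal.inv_le_inv]
    rw [show ENNReal.ofReal 2 = 2 by simp]
    calc (2:ℝ≥0∞) = 2 ^ 1 := by simp
      _ ≤ 2 ^ n := pow_le_pow_right₀ (by norm_num) hn
  have hμE : 1 / 2 ≤ μ Bᶜ := by
    rw [prob_compl_eq_one_sub hBm]
    calc (1:ℝ≥0∞)/2 = 1 - 1/2 := by simp
      _ ≤ _ := tsub_le_tsub_left hμB _
  have hH : μ Bᶜ ≤ (∫⁻ x in Bᶜ, W x ∂μ) ^ (δ / (1 + δ)) * (∫⁻ x, W x ^ (-δ) ∂μ) ^ (1 / (1 + δ)) := by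
    calc μ Bᶜ = ∫⁻ x in Bᶜ, 1 ∂μ := by simp
      _ = ∫⁻ x in Bᶜ, W x ^ (δ / (1 + δ)) * (W x ^ (-δ)) ^ (1 / (1 + δ)) ∂μ := by
          refine lintegral_congr fun x => ?_
          rw [← ENNReal.rpow_mul, ← ENNReal.rpow_add _ _ (h0 x) (ht x)]
          rw [show δ / (1 + δ) + -δ * (1 / (1 + δ)) = 0 by ring, ENNReal.rpow_zero]
      _ ≤ (∫⁻ x in Bᶜ, W x ∂μ) ^ (δ / (1 + δ)) * (∫⁻ x in Bᶜ, W x ^ (-δ) ∂μ) ^ (1 / (1 + δ)) := by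
          refine ENNReal.lintegral_mul_norm_pow_le (by fun_prop) (by fun_prop) (by positivity) (by positivity) ?_
          field_simp
          ring
      _ ≤ _ := by
          gcongr
          exact Measure.restrict_le_self
  have hH2 := ENNReal.rpow_le_rpow (hμE.trans hH) (z := (1 + δ) / δ) (by positivity)
  rw [ENNReal.mul_rpow_of_nonneg _ _ (by positivity), ← ENNReal.rpow_mul, ← ENNReal.rpow_mul,
    show δ / (1 + δ) * ((1 + δ) / δ) = 1 by field_simp, ENNReal.rpow_one,
    show 1 / (1 + δ) * ((1 + δ) / δ) = 1 / δ by field_simp] at hH2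
  have hlow : θ * ∫⁻ x, W x ∂μ ≤ ∫⁻ x in Bᶜ, W x ∂μ := by
    rw [hθ, div_eq_mul_inv, mul_right_comm, ← div_eq_mul_inv, ENNReal.div_le_iff (by
      exact (lt_of_lt_of_le one_pos hC1).ne') hC]
    calc _ ≤ ((∫⁻ x in Bᶜ, W x ∂μ) * (∫⁻ x, W x ^ (-δ) ∂μ) ^ (1 / δ)) * ∫⁻ x, W x ∂μ := by gcongr
      _ = (∫⁻ x in Bᶜ, W x ∂μ) * ((∫⁻ x, W x ∂μ) * (∫⁻ x, W x ^ (-δ) ∂μ) ^ (1 / δ)) := by ring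
      _ ≤ _ := by gcongr; exact h c _ h2R
  have hsum := lintegral_add_compl (μ := μ) W hBm
  have hB : ∫⁻ x in B, W x ∂μ ≤ (1 - θ) * ∫⁻ x, W x ∂μ := by
    rw [ENNReal.sub_mul (fun _ _ => f2), one_mul]
    refine ENNReal.le_sub_of_add_le_right ?_ ?_
    · refine ne_top_of_le_ne_top f2 (hlow.trans (setLIntegral_le_lintegral _ _))
    · exact (add_le_add_right hlow _).trans hsum.le
  have e1 : ∫⁻ x in B, W x = volume (Metric.closedBall c (2 * R)) * ∫⁻ x in B, W x ∂μ := by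
    rw [hμ, mfiAvg, Measure.restrict_smul, lintegral_smul_measure, Measure.restrict_restrict hBm,
      inter_eq_left.2 hsub, smul_eq_mul, ← mul_assoc, ENNReal.mul_inv_cancel (mfi_vol_ball_pos c h2R)
      (mfi_vol_ball_top c h2R), one_mul]
  rw [e1, mfiAvg_lintegral' c h2R, mul_left_comm]
  gcongr

lemma mfi_sum_half {b : ℤ → ℝ≥0∞} {κ : ℝ≥0∞} (hb : ∀ k, b k ≤ κ * b (k + 1))
    (S : Finset ℤ) (hS : ∀ k ∈ S, b k ≤ 1) : ∑ k ∈ S, b k ≤ (1 - κ)⁻¹ := by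
  rcases S.eq_empty_or_nonempty with rfl | hne
  · simp
  set K := S.max' hne
  have hiter : ∀ j : ℕ, b (K - j) ≤ κ ^ j := by
    intro j
    induction j with
    | zero => simpa using hS K (S.max'_mem hne)
    | succ j ih =>
      refine (hb _).trans ?_
      rw [show K - ((j + 1 : ℕ) : ℤ) + 1 = K - j by push_cast; ring, pow_succ, mul_comm]
      gcongr
  calc ∑ k ∈ S, b k ≤ ∑ k ∈ S, κ ^ (K - k).toNat := by
        refine Finset.sum_le_sum fun k hk => ?_
        have hkK : k ≤ K := S.le_max' k hk
        have := hiter (K - k).toNat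
        rwa [Int.toNat_of_nonneg (by linarith), show K - (K - k) = k by ring] at this
    _ = ∑ j ∈ S.image (fun k => (K - k).toNat), κ ^ j := by
        rw [Finset.sum_image]
        intro x hx y hy hxy
        have hx' : x ≤ K := S.le_max' x hx
        have hy' : y ≤ K := S.le_max' y hy
        simp only at hxy
        omega
    _ ≤ ∑' j, κ ^ j := ENNReal.sum_le_tsum _
    _ = (1 - κ)⁻¹ := ENNReal.tsum_geometric κ

lemma mfi_sum {b : ℤ → ℝ≥0∞} {κ : ℝ≥0∞} (hb0 : ∀ k, b k ≠ 0) (hbt : ∀ k, b k ≠ ⊤)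
    (hb : ∀ k, b k ≤ κ * b (k + 1)) :
    ∑' k, min (b k) (b k)⁻¹ ≤ 2 * (1 - κ)⁻¹ := by
  rw [ENNReal.tsum_eq_iSup_sum]
  refine iSup_le fun S => ?_
  classical
  rw [← Finset.sum_filter_add_sum_filter_not S (fun k => b k ≤ 1), two_mul]
  refine add_le_add ?_ ?_
  · refine (Finset.sum_le_sum fun k _ => min_le_left _ _).trans ?_
    exact mfi_sum_half hb _ fun k hk => (Finset.mem_filter.1 hk).2
  · refine (Finset.sum_le_sum fun k _ => min_le_right _ _).trans ?_
    have := mfi_sum_half (b := fun k => (b (-k))⁻¹) (κ := κ) (fun k => by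
      have h1 := hb (-(k+1))
      rw [show -(k+1) + 1 = -k by ring] at h1
      rw [← div_eq_mul_inv, ENNReal.le_div_iff_mul_le (Or.inl (hb0 _)) (Or.inl (hbt _)), mul_comm,
        ← div_eq_mul_inv]
      exact (ENNReal.div_le_iff (hb0 _) (hbt _)).2 h1)
      ((S.filter (fun k => ¬ b k ≤ 1)).map (Equiv.neg ℤ).toEmbedding) (fun k hk => by
        rw [Finset.mem_map] at hk
        obtain ⟨j, hj, rfl⟩ := hk
        have := (Finset.mem_filter.1 hj).2
        simp only [Equiv.coe_toEmbedding, Equiv.neg_apply, neg_neg]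
        exact ENNReal.inv_le_one.2 (not_le.1 this).le)
    rw [Finset.sum_map] at this
    simpa using this

lemma mfi_ae_center {n : ℕ} {U : (Fin n → ℝ) → ℝ≥0∞} {C : ℝ≥0∞} (h : MfiA1 U C) :
    ∀ᵐ y, ∀ k : ℤ, ∫⁻ z in Metric.closedBall y ((2:ℝ) ^ k), U z ≤
      C * 2 ^ n * volume (Metric.closedBall y ((2:ℝ) ^ k)) * U y := by
  have hall : ∀ᵐ y, ∀ (i : ℕ) (k : ℤ),
      y ∈ Metric.closedBall (TopologicalSpace.denseSeq (Fin n → ℝ) i) (2 * (2:ℝ) ^ k) →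
      ∫⁻ z in Metric.closedBall (TopologicalSpace.denseSeq (Fin n → ℝ) i) (2 * (2:ℝ) ^ k), U z ≤
      C * volume (Metric.closedBall (TopologicalSpace.denseSeq (Fin n → ℝ) i) (2 * (2:ℝ) ^ k)) * U y := by
    rw [ae_all_iff]; intro i
    rw [ae_all_iff]; intro k
    rw [← ae_restrict_iff' measurableSet_closedBall]
    exact h _ _ (by positivity)
  filter_upwards [hall] with y hy k
  have hk : (0:ℝ) < 2 ^ k := by positivity
  obtain ⟨i, hi⟩ := (TopologicalSpace.denseRange_denseSeq (Fin n → ℝ)).exists_dist_lt y hk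
  have hsub : Metric.closedBall y ((2:ℝ) ^ k) ⊆
      Metric.closedBall (TopologicalSpace.denseSeq (Fin n → ℝ) i) (2 * (2:ℝ) ^ k) := by
    apply Metric.closedBall_subset_closedBall'
    linarith
  refine (lintegral_mono_set hsub).trans ((hy i k ?_).trans (le_of_eq ?_))
  · rw [Metric.mem_closedBall]; linarith
  · rw [mfi_vol_ball_mul _ y hk.le (by norm_num), show ENNReal.ofReal 2 = 2 by simp]
    ring

/-- one-scale estimate, abstract form -/
lemma mfi_scale {α : Type*} [MeasurableSpace α] (μ : Measure α) [IsProbabilityMeasure μ]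
    {U W : α → ℝ≥0∞} (hU : Measurable U) (hW : Measurable W) (h0 : ∀ x, W x ≠ 0) (ht : ∀ x, W x ≠ ⊤)
    {δ : ℝ} (hδ : 0 < δ) (hδ1 : δ ≤ 1)
    {C : ℝ≥0∞} (hC : C ≠ ⊤) (hC1 : 1 ≤ C)
    (h : (∫⁻ x, W x ∂μ) * (∫⁻ x, W x ^ (-δ) ∂μ) ^ (1 / δ) ≤ C)
    {e : ℝ} (he : 0 < e) {a : ℝ≥0∞}
    (hRH : ∫⁻ x, U x ^ (1 + e) ∂μ ≤ 2 * a ^ (1 + e)) {l : ℝ≥0∞} (hl0 : l ≠ 0) (hlt : l ≠ ⊤) :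
    ∫⁻ x, (if W x < l then U x * W x else 0) ∂μ ≤
      2 * C * l * a * min (((∫⁻ x, W x ∂μ) / l) ^ (δ * (e / (1 + e))))
        ((((∫⁻ x, W x ∂μ) / l) ^ (δ * (e / (1 + e))))⁻¹) := by
  obtain ⟨f1, f2, f3⟩ := mfi_ainf_facts μ hW h0 ht hδ hC h
  set J := ∫⁻ x, W x ∂μ with hJ
  have hconj : (1 + e).HolderConjugate ((1 + e) / e) := by
    rw [Real.holderConjugate_iff]
    constructor
    · linarith
    · field_simp
  have key : ∀ d : ℝ, d ≤ 1 → d * (e / (1 + e)) ≤ 1 → 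
      ∫⁻ x, (if W x < l then U x * W x else 0) ∂μ ≤
      l * (2 * a * (∫⁻ x, (W x / l) ^ d ∂μ) ^ (e / (1 + e))) := by
    intro d hd hd2
    set ξ := d * (e / (1 + e)) with hξ
    calc ∫⁻ x, (if W x < l then U x * W x else 0) ∂μ
        ≤ ∫⁻ x, l * (U x * (W x / l) ^ ξ) ∂μ := by
          refine lintegral_mono fun x => ?_
          simp only
          split_ifs with hx
          · have h1 : W x / l ≤ 1 := ENNReal.div_le_of_le_mul (by simpa using hx.le)
            have h2 : W x / l ≤ (W x / l) ^ ξ := by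
              conv_lhs => rw [← ENNReal.rpow_one (W x / l)]
              exact ENNReal.rpow_le_rpow_of_exponent_ge h1 hd2
            calc U x * W x = l * (U x * (W x / l)) := by
                  rw [mul_left_comm, ENNReal.mul_div_cancel hl0 hlt]
              _ ≤ _ := by gcongr
          · simp
      _ = l * ∫⁻ x, (U * fun x => (W x / l) ^ ξ) x ∂μ := by
          rw [lintegral_const_mul' _ _ hlt]; rfl
      _ ≤ l * ((∫⁻ x, U x ^ (1 + e) ∂μ) ^ (1 / (1 + e)) *
            (∫⁻ x, ((W x / l) ^ ξ) ^ ((1 + e) / e) ∂μ) ^ (1 / ((1 + e) / e))) := by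
          gcongr
          exact ENNReal.lintegral_mul_le_Lp_mul_Lq μ hconj (by fun_prop) (by fun_prop)
      _ ≤ _ := by
          have e1 : ∀ x, ((W x / l) ^ ξ) ^ ((1 + e) / e) = (W x / l) ^ d := by
            intro x
            rw [← ENNReal.rpow_mul, hξ]
            congr 1
            field_simp
          simp_rw [e1]
          rw [show 1 / ((1 + e) / e) = e / (1 + e) by field_simp]
          gcongr
          calc (∫⁻ x, U x ^ (1 + e) ∂μ) ^ (1 / (1 + e)) ≤ (2 * a ^ (1 + e)) ^ (1 / (1 + e)) := by gcongr
            _ = 2 ^ (1 / (1 + e)) * a := by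
              rw [ENNReal.mul_rpow_of_nonneg _ _ (by positivity), ← ENNReal.rpow_mul,
                mul_one_div_cancel (by positivity), ENNReal.rpow_one]
            _ ≤ 2 * a := by
              gcongr
              conv_rhs => rw [← ENNReal.rpow_one 2]
              refine ENNReal.rpow_le_rpow_of_exponent_le (by norm_num) ?_
              rw [div_le_one (by positivity)]; linarith
  have hee : e / (1 + e) ≤ 1 := by rw [div_le_one (by positivity)]; linarith
  have hee0 : 0 < e / (1 + e) := by positivity
  set A := J / l with hA
  have hp : (∫⁻ x, (W x / l) ^ δ ∂μ) ≤ A ^ δ := by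
    refine (mfi_jensen μ (by fun_prop) hδ.le hδ1).trans (le_of_eq ?_)
    simp_rw [div_eq_mul_inv]
    rw [lintegral_mul_const _ hW, hA, div_eq_mul_inv]
  have hm : (∫⁻ x, (W x / l) ^ (-δ) ∂μ) ≤ C ^ δ * A ^ (-δ) := by
    have e2 : ∀ x, (W x / l) ^ (-δ) = W x ^ (-δ) * l ^ δ := by
      intro x
      rw [div_eq_mul_inv, ENNReal.mul_rpow_of_ne_top (ht x) (ENNReal.inv_ne_top.2 hl0), ENNReal.inv_rpow,
        ENNReal.rpow_neg l, inv_inv]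
    simp_rw [e2]
    rw [lintegral_mul_const _ (by fun_prop)]
    calc _ ≤ C ^ δ * J ^ (-δ) * l ^ δ := by gcongr
      _ = _ := by
        rw [hA, div_eq_mul_inv, ENNReal.mul_rpow_of_ne_top f2 (ENNReal.inv_ne_top.2 hl0), ENNReal.inv_rpow,
        ENNReal.rpow_neg l, inv_inv, mul_assoc]
  rw [mul_min]
  refine le_min ?_ ?_
  · refine (key δ hδ1 (by nlinarith)).trans ?_
    calc _ ≤ l * (2 * a * (A ^ δ) ^ (e / (1 + e))) := by gcongr
      _ = 1 * (2 * l * a * A ^ (δ * (e / (1 + e)))) := by rw [← ENNReal.rpow_mul]; ring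
      _ ≤ C * (2 * l * a * A ^ (δ * (e / (1 + e)))) := by gcongr
      _ = _ := by ring
  · refine (key (-δ) (by linarith) (by nlinarith)).trans ?_
    calc _ ≤ l * (2 * a * (C ^ δ * A ^ (-δ)) ^ (e / (1 + e))) := by gcongr
      _ = C ^ (δ * (e / (1 + e))) * (2 * l * a * (A ^ (δ * (e / (1 + e))))⁻¹) := by
          rw [ENNReal.mul_rpow_of_nonneg _ _ hee0.le, ← ENNReal.rpow_mul, ← ENNReal.rpow_mul, neg_mul,
            ENNReal.rpow_neg]; ring
      _ ≤ C ^ (1:ℝ) * (2 * l * a * (A ^ (δ * (e / (1 + e))))⁻¹) := by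
          gcongr
          nlinarith
      _ = _ := by rw [ENNReal.rpow_one]; ring

/-- kernel estimate -/
lemma mfi_kernel {n : ℕ} (hn : 0 < n) {U W : (Fin n → ℝ) → ℝ≥0∞} (hU : Measurable U) (hW : Measurable W)
    (hUt : ∀ x, U x ≠ ⊤) (h0 : ∀ x, W x ≠ 0) (ht : ∀ x, W x ≠ ⊤)
    {C1 : ℝ≥0∞} (hC1t : C1 ≠ ⊤) (hC11 : 1 ≤ C1) (hA1 : MfiA1 U C1)
    {δ : ℝ} (hδ : 0 < δ) (hδ1 : δ ≤ 1)
    {C : ℝ≥0∞} (hC : C ≠ ⊤) (hC1 : 1 ≤ C) (h : MfiAinf W δ C) :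
    ∃ K : ℝ≥0∞, K ≠ ⊤ ∧ ∀ᵐ y, ∀ s : ℝ≥0∞, s ≠ 0 → s ≠ ⊤ →
      ∫⁻ x in {x | W x * edist x y ^ n < s}, U x * W x ≤ K * U y * s := by
  obtain ⟨e, he, hRH⟩ := mfi_RH hU hA1 hC1t hC11 hUt
  obtain ⟨κ, hκ, hgr⟩ := mfi_growth hn hW h0 ht hδ hC hC1 h
  set ξ := δ * (e / (1 + e)) with hξ
  have hξ0 : 0 < ξ := by positivity
  have hκ' : κ ^ ξ < 1 := ENNReal.rpow_lt_one hκ hξ0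
  refine ⟨2 * C * 4 ^ n * (C1 * 2 ^ n) * (2 * (1 - κ ^ ξ)⁻¹), ?_, ?_⟩
  · refine ENNReal.mul_ne_top (ENNReal.mul_ne_top (ENNReal.mul_ne_top (ENNReal.mul_ne_top (by simp) hC) ?_)
      (ENNReal.mul_ne_top hC1t ?_)) (ENNReal.mul_ne_top (by simp) ?_)
    · exact ENNReal.pow_ne_top (by simp)
    · exact ENNReal.pow_ne_top (by simp)
    · exact ENNReal.inv_ne_top.2 (tsub_pos_of_lt hκ').ne'
  filter_upwards [mfi_ae_center hA1] with y hy s hs0 hst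
  set Q : ℤ → Set (Fin n → ℝ) := fun k => Metric.closedBall y ((2:ℝ) ^ k) with hQ
  have hpos : ∀ k : ℤ, (0:ℝ) < 2 ^ k := fun k => by positivity
  have hpt : ∀ k : ℤ, ENNReal.ofReal ((2:ℝ)^k) ≠ 0 := fun k => by simp [hpos k]
  set l : ℤ → ℝ≥0∞ := fun k => s / ENNReal.ofReal ((2:ℝ) ^ (k - 1)) ^ n with hl
  have hl0 : ∀ k, l k ≠ 0 := fun k => (ENNReal.div_pos hs0 (ENNReal.pow_ne_top ENNReal.ofReal_ne_top)).ne'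
  have hlt : ∀ k, l k ≠ ⊤ := fun k => ENNReal.div_ne_top hst (pow_ne_zero _ (hpt _))
  have hlv : ∀ k, l k * volume (Q k) = 4 ^ n * s := by
    intro k
    simp only [hl, hQ]
    rw [mfi_vol_ball y (hpos k).le, show 2 * (2:ℝ)^k = 4 * 2 ^ (k - 1) by
      rw [zpow_sub_one₀ (by norm_num)]; ring, ENNReal.ofReal_mul (by norm_num), mul_pow,
      mul_left_comm, ENNReal.div_mul_cancel (pow_ne_zero _ (hpt _)) (ENNReal.pow_ne_top ENNReal.ofReal_ne_top),
      show ENNReal.ofReal 4 = 4 by simp]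
  -- the sequence
  set b : ℤ → ℝ≥0∞ := fun k => ((∫⁻ x, W x ∂(mfiAvg y ((2:ℝ)^k))) / l k) ^ ξ with hb
  have hfacts : ∀ k, _ := fun k : ℤ => 
    @mfi_ainf_facts _ _ (mfiAvg y ((2:ℝ)^k)) (mfiAvg_prob y (hpos k)) W hW h0 ht δ hδ C hC (h y _ (hpos k))
  have hbase : ∀ k, (∫⁻ x, W x ∂(mfiAvg y ((2:ℝ)^k))) / l k = (∫⁻ x in Q k, W x) / (4 ^ n * s) := by
    intro k
    rw [mfiAvg_lintegral, ← hlv k, div_eq_mul_inv, div_eq_mul_inv,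
      ENNReal.mul_inv (Or.inl (hl0 k)) (Or.inl (hlt k))]
    ring
  have hb0 : ∀ k, b k ≠ 0 := by
    intro k
    refine (ENNReal.rpow_pos (ENNReal.div_pos (hfacts k).1 (hlt k)) (ENNReal.div_ne_top (hfacts k).2.1 (hl0 k))).ne'
  have hbt : ∀ k, b k ≠ ⊤ := fun k =>
    ENNReal.rpow_ne_top_of_nonneg hξ0.le (ENNReal.div_ne_top (hfacts k).2.1 (hl0 k))
  have hbg : ∀ k, b k ≤ κ ^ ξ * b (k + 1) := by
    intro k
    simp only [hb]
    rw [← ENNReal.mul_rpow_of_nonneg _ _ hξ0.le, hbase, hbase]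
    gcongr
    rw [← mul_div_assoc]
    gcongr
    have := hgr y _ (hpos k)
    simp only [hQ]
    rwa [zpow_add_one₀ (by norm_num), mul_comm ((2:ℝ)^k) 2]
  have hsum := mfi_sum hb0 hbt hbg
  -- decomposition
  set T := {x | W x * edist x y ^ n < s} with hT
  have hTm : MeasurableSet T := measurableSet_lt (by fun_prop) measurable_const
  have hcov : T ≤ᵐ[volume] (⋃ k : ℤ, T ∩ (Q k \ Q (k - 1)) : Set _) := by
    have hy0 : ∀ᵐ x : Fin n → ℝ, x ≠ y := by
      have : Nonempty (Fin n) := ⟨⟨0, hn⟩⟩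
      rw [ae_iff]; simp
    filter_upwards [hy0] with x hx hxT
    obtain ⟨k, hk1, hk2⟩ := exists_mem_Ioc_zpow (dist_pos.2 hx) (y := (2:ℝ)) (by norm_num)
    refine mem_iUnion.2 ⟨k + 1, hxT, ?_, ?_⟩
    · exact hk2
    · simp only [hQ, Metric.mem_closedBall, not_le, add_sub_cancel_right]
      exact hk1
  have hterm : ∀ k, ∫⁻ x in T ∩ (Q k \ Q (k - 1)), U x * W x ≤
      2 * C * 4 ^ n * (C1 * 2 ^ n) * U y * s * min (b k) (b k)⁻¹ := by
    intro k
    have := mfiAvg_prob y (hpos k)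
    set μ := mfiAvg y ((2:ℝ)^k) with hμ
    have hQm : MeasurableSet (Q k) := measurableSet_closedBall
    have hv0 : volume (Q k) ≠ 0 := mfi_vol_ball_pos y (hpos k)
    have hvt : volume (Q k) ≠ ⊤ := mfi_vol_ball_top y (hpos k)
    have hav : ∫⁻ x, U x ∂μ = (∫⁻ x in Q k, U x) / volume (Q k) := by
      rw [hμ, mfiAvg_lintegral, mul_comm, div_eq_mul_inv]
    have hrh : ∫⁻ x, U x ^ (1 + e) ∂μ ≤ 2 * (∫⁻ x, U x ∂μ) ^ (1 + e) := by
      have h1 := hRH y _ (hpos k)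
      rw [← hav] at h1
      rw [hμ, mfiAvg_lintegral, ← hμ, mul_comm, ← div_eq_mul_inv, ENNReal.div_le_iff hv0 hvt]
      refine h1.trans (le_of_eq ?_)
      rw [mfiAvg_lintegral' y (hpos k), ← hμ, add_comm 1 e,
        ENNReal.rpow_add_of_nonneg _ _ he.le zero_le_one, ENNReal.rpow_one]
      ring
    have hsc := mfi_scale μ hU hW h0 ht hδ hδ1 hC hC1 (h y _ (hpos k)) he hrh (hl0 k) (hlt k)
    have havy : ∫⁻ x, U x ∂μ ≤ C1 * 2 ^ n * U y := by
      rw [hav, ENNReal.div_le_iff hv0 hvt]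
      refine (hy k).trans (le_of_eq ?_)
      ring
    have hmeas : MeasurableSet (T ∩ (Q k \ Q (k - 1))) :=
      hTm.inter (hQm.diff measurableSet_closedBall)
    calc ∫⁻ x in T ∩ (Q k \ Q (k - 1)), U x * W x
        ≤ ∫⁻ x in T ∩ (Q k \ Q (k - 1)), (if W x < l k then U x * W x else 0) := by
          refine setLIntegral_mono' hmeas fun x hx => ?_
          rw [if_pos]
          simp only [hl]
          rw [ENNReal.lt_div_iff_mul_lt (Or.inl (pow_ne_zero _ (hpt _)))
            (Or.inl (ENNReal.pow_ne_top ENNReal.ofReal_ne_top))]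
          refine lt_of_le_of_lt ?_ hx.1
          gcongr
          rw [edist_dist]
          refine ENNReal.ofReal_le_ofReal ?_
          have := hx.2.2
          simp only [hQ, Metric.mem_closedBall, not_le] at this
          exact this.le
      _ ≤ ∫⁻ x in Q k, (if W x < l k then U x * W x else 0) :=
          lintegral_mono_set fun x hx => hx.2.1
      _ = volume (Q k) * ∫⁻ x, (if W x < l k then U x * W x else 0) ∂μ := mfiAvg_lintegral' y (hpos k) _
      _ ≤ volume (Q k) * (2 * C * l k * (C1 * 2 ^ n * U y) * min (b k) (b k)⁻¹) := by
          refine mul_le_mul_right (hsc.trans ?_) _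
          gcongr
      _ = (l k * volume (Q k)) * (2 * C * (C1 * 2 ^ n * U y) * min (b k) (b k)⁻¹) := by ring
      _ = _ := by rw [hlv]; ring
  calc ∫⁻ x in T, U x * W x ≤ ∫⁻ x in ⋃ k : ℤ, T ∩ (Q k \ Q (k - 1)), U x * W x :=
        lintegral_mono_set' hcov
    _ ≤ ∑' k : ℤ, ∫⁻ x in T ∩ (Q k \ Q (k - 1)), U x * W x := lintegral_iUnion_le _ _
    _ ≤ ∑' k : ℤ, 2 * C * 4 ^ n * (C1 * 2 ^ n) * U y * s * min (b k) (b k)⁻¹ := ENNReal.tsum_le_tsum hterm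
    _ = 2 * C * 4 ^ n * (C1 * 2 ^ n) * U y * s * ∑' k : ℤ, min (b k) (b k)⁻¹ := ENNReal.tsum_mul_left
    _ ≤ 2 * C * 4 ^ n * (C1 * 2 ^ n) * U y * s * (2 * (1 - κ ^ ξ)⁻¹) := by gcongr
    _ = _ := by ring

/-- dyadic pointwise bound -/
lemma mfi_dyadic (k s : ℝ≥0∞) (hs : s ≠ 0) (hst : s ≠ ⊤) :
    k ≤ s + ∑' j : ℕ, (if 2 ^ j * s < k then 2 ^ (j + 1) * s else 0) := by
  by_cases hk : k = ⊤
  · subst hk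
    have : ∑' j : ℕ, (if (2:ℝ≥0∞) ^ j * s < ⊤ then (2:ℝ≥0∞) ^ (j + 1) * s else 0) = ⊤ := by
      rw [eq_top_iff]
      calc (⊤ : ℝ≥0∞) = ∑' _ : ℕ, s := (ENNReal.tsum_const_eq_top_of_ne_zero hs).symm
        _ ≤ _ := by
          refine ENNReal.tsum_le_tsum fun j => ?_
          rw [if_pos (ENNReal.mul_lt_top (by simp) hst.lt_top)]
          exact le_mul_of_one_le_left (by simp) (one_le_pow₀ (by norm_num))
    rw [this]; simp
  · by_cases hks : k ≤ s
    · exact hks.trans le_self_add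
    · push Not at hks
      have hex : ∃ j : ℕ, k ≤ 2 ^ j * s := by
        obtain ⟨j, hj⟩ := ENNReal.exists_nat_mul_gt hs hk
        refine ⟨j, hj.le.trans ?_⟩
        gcongr
        exact_mod_cast Nat.lt_two_pow_self.le
      classical
      have h1 := Nat.find_spec hex
      have h2 : Nat.find hex ≠ 0 := by
        intro h; rw [h] at h1; simp at h1; exact absurd h1 (not_le.2 hks)
      obtain ⟨j, hj⟩ := Nat.exists_eq_succ_of_ne_zero h2
      have h3 := Nat.find_min hex (m := j) (by omega)
      push Not at h3
      rw [hj] at h1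
      refine h1.trans (le_trans ?_ le_add_self)
      refine le_trans ?_ (ENNReal.le_tsum j)
      rw [if_pos h3]

/-- weak type implies restricted integrability -/
lemma mfi_lorentz {X : Type*} [MeasurableSpace X] (σ : Measure X) {k : X → ℝ≥0∞} (hk : Measurable k)
    {r : ℝ} (hr : 1 < r) {K : ℝ≥0∞} (hK0 : K ≠ 0) (hK : K ≠ ⊤)
    (h : ∀ s : ℝ≥0∞, s ≠ 0 → s ≠ ⊤ → σ {x | s < k x} ≤ K * s ^ (-r))
    {E : Set X} (hE : σ E ≠ ⊤) (hE0 : σ E ≠ 0) :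
    ∫⁻ x in E, k x ∂σ ≤ (1 + ∑' j : ℕ, 2 * ((2:ℝ≥0∞) ^ (1 - r)) ^ j) * K ^ (1 / r) * σ E ^ (1 - 1 / r) := by
  set s : ℝ≥0∞ := (K / σ E) ^ (1 / r) with hs
  have hr0 : 0 < r := by linarith
  have hq0 : K / σ E ≠ 0 := ENNReal.div_ne_zero.2 ⟨hK0, hE⟩
  have hqt : K / σ E ≠ ⊤ := ENNReal.div_ne_top hK hE0
  have hs0 : s ≠ 0 := by simp [hs, ENNReal.rpow_eq_zero_iff, hq0, hqt]
  have hst : s ≠ ⊤ := ENNReal.rpow_ne_top_of_nonneg (by positivity) hqt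
  have hsE : s * σ E = K ^ (1 / r) * σ E ^ (1 - 1 / r) := by
    rw [hs, ENNReal.div_rpow_of_nonneg _ _ (by positivity), sub_eq_add_neg,
      ENNReal.rpow_add _ _ hE0 hE, ENNReal.rpow_one, ENNReal.rpow_neg, ENNReal.div_eq_inv_mul]
    ring
  have hsr : K * s ^ (-r) = σ E := by
    rw [hs, ← ENNReal.rpow_mul]
    have : 1 / r * -r = -1 := by field_simp
    rw [this, ENNReal.rpow_neg_one, ENNReal.inv_div (Or.inl hE) (Or.inl hE0), ENNReal.mul_div_cancel hK0 hK]
  have hmeas : ∀ t : ℝ≥0∞, MeasurableSet {x | t < k x} := fun t => measurableSet_lt measurable_const hk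
  calc ∫⁻ x in E, k x ∂σ
      ≤ ∫⁻ x in E, (s + ∑' j : ℕ, (if 2 ^ j * s < k x then 2 ^ (j + 1) * s else 0)) ∂σ :=
        lintegral_mono fun x => mfi_dyadic _ _ hs0 hst
    _ = s * σ E + ∑' j : ℕ, ∫⁻ x in E, (if 2 ^ j * s < k x then 2 ^ (j + 1) * s else 0) ∂σ := by
        rw [lintegral_add_left measurable_const, lintegral_const, Measure.restrict_apply_univ,
          lintegral_tsum]
        intro j
        exact (Measurable.ite (hmeas _) measurable_const measurable_const).aemeasurable
    _ ≤ s * σ E + ∑' j : ℕ, (2 * ((2:ℝ≥0∞) ^ (1 - r)) ^ j) * (s * σ E) := by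
        refine add_le_add le_rfl (ENNReal.tsum_le_tsum fun j => ?_)
        have e1 : ∫⁻ x in E, (if 2 ^ j * s < k x then 2 ^ (j + 1) * s else 0) ∂σ
            ≤ 2 ^ (j + 1) * s * σ {x | 2 ^ j * s < k x} := by
          calc _ ≤ ∫⁻ x, (if 2 ^ j * s < k x then 2 ^ (j + 1) * s else 0) ∂σ :=
                setLIntegral_le_lintegral _ _
            _ = ∫⁻ x, {x | 2 ^ j * s < k x}.indicator (fun _ => 2 ^ (j + 1) * s) x ∂σ := by
                refine lintegral_congr fun x => ?_
                simp [Set.indicator_apply]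
            _ = _ := by rw [lintegral_indicator_const (hmeas _)]
        refine e1.trans ?_
        have h2j0 : (2:ℝ≥0∞) ^ j ≠ 0 := by simp
        have h2jt : (2:ℝ≥0∞) ^ j ≠ ⊤ := by simp
        have e2 := h (2 ^ j * s) (mul_ne_zero h2j0 hs0) (ENNReal.mul_ne_top h2jt hst)
        rw [ENNReal.mul_rpow_of_ne_zero h2j0 hs0] at e2
        calc _ ≤ 2 ^ (j + 1) * s * (K * ((2 ^ j) ^ (-r) * s ^ (-r))) := by
              exact mul_le_mul_right e2 _
          _ = 2 * (2 ^ j * ((2:ℝ≥0∞) ^ j) ^ (-r)) * (s * (K * s ^ (-r))) := by ring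
          _ = _ := by
            rw [hsr]
            congr 2
            rw [← ENNReal.rpow_natCast (2 ^ (1 - r)), ← ENNReal.rpow_mul, ← ENNReal.rpow_natCast 2,
              ← ENNReal.rpow_mul, ← ENNReal.rpow_add _ _ (by simp) (by simp)]
            congr 1; ring
    _ = _ := by
        rw [ENNReal.tsum_mul_right, hsE]; ring

lemma mfi_geom {r : ℝ} (hr : 1 < r) : (1 + ∑' j : ℕ, 2 * ((2:ℝ≥0∞) ^ (1 - r)) ^ j) ≠ ⊤ := by
  rw [ENNReal.tsum_mul_left, ENNReal.tsum_geometric]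
  have : (2:ℝ≥0∞) ^ (1 - r) < 1 := ENNReal.rpow_lt_one_of_one_lt_of_neg (by norm_num) (by linarith)
  refine ENNReal.add_ne_top.2 ⟨by simp, ENNReal.mul_ne_top (by simp) ?_⟩
  rw [ENNReal.inv_ne_top]
  exact (tsub_pos_of_lt this).ne'

/-- abstract weak type bound -/
lemma mfi_weak {X Y : Type*} [MeasurableSpace X] [MeasurableSpace Y] (σ : Measure X) [SigmaFinite σ]
    (μ : Measure Y) [SFinite μ] {k : X → Y → ℝ≥0∞} (hk : Measurable (Function.uncurry k))
    {r : ℝ} (hr : 1 < r) {K : ℝ≥0∞} (hK : K ≠ ⊤)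
    (h : ∀ᵐ y ∂μ, ∀ s : ℝ≥0∞, s ≠ 0 → s ≠ ⊤ → σ {x | s < k x y} ≤ K * s ^ (-r)) :
    ∃ C : ℝ≥0∞, C ≠ ⊤ ∧ ∀ F : Y → ℝ≥0∞, AEMeasurable F μ → ∀ t : ℝ≥0∞, t ≠ 0 → t ≠ ⊤ →
      σ {x | t < ∫⁻ y, k x y * F y ∂μ} ≤ C * ((∫⁻ y, F y ∂μ) / t) ^ r := by
  set D : ℝ≥0∞ := (1 + ∑' j : ℕ, 2 * ((2:ℝ≥0∞) ^ (1 - r)) ^ j) * (K + 1) ^ (1 / r) with hD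
  have hr0 : 0 < r := by linarith
  have hDt : D ≠ ⊤ := ENNReal.mul_ne_top (mfi_geom hr)
    (ENNReal.rpow_ne_top_of_nonneg (by positivity) (by simp [hK]))
  refine ⟨D ^ r, ENNReal.rpow_ne_top_of_nonneg hr0.le hDt, ?_⟩
  intro F hF t ht0 htt
  wlog hFm : Measurable F generalizing F
  · have e := this (hF.mk F) hF.measurable_mk.aemeasurable hF.measurable_mk
    have e1 : ∀ x, ∫⁻ y, k x y * F y ∂μ = ∫⁻ y, k x y * hF.mk F y ∂μ := by
      intro x
      refine lintegral_congr_ae ?_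
      filter_upwards [hF.ae_eq_mk] with y hy
      rw [hy]
    simp_rw [e1]
    rwa [lintegral_congr_ae hF.ae_eq_mk]
  set A := ∫⁻ y, F y ∂μ with hA
  have hkF : Measurable (Function.uncurry fun x y => k x y * F y) := by
    exact hk.mul (hFm.comp measurable_snd)
  have hG : Measurable fun x => ∫⁻ y, k x y * F y ∂μ := hkF.lintegral_prod_right
  set S := {x | t < ∫⁻ y, k x y * F y ∂μ} with hS
  have hSm : MeasurableSet S := measurableSet_lt measurable_const hG
  refine le_of_forall_lt fun c hc => ?_
  obtain ⟨E, hEm, hES, hcE, hEt⟩ := Measure.exists_subset_measure_lt_top hSm hc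
  refine hcE.trans_le ?_
  have hE0 : σ E ≠ 0 := (lt_of_le_of_lt (by simp) hcE).ne'
  have hEt' := hEt.ne
  have main : t * σ E ≤ D * σ E ^ (1 - 1 / r) * A := by
    calc t * σ E = ∫⁻ x in E, t ∂σ := by simp
      _ ≤ ∫⁻ x in E, ∫⁻ y, k x y * F y ∂μ ∂σ := by
          refine setLIntegral_mono hG fun x hx => (hES hx).le
      _ = ∫⁻ y, ∫⁻ x in E, k x y * F y ∂σ ∂μ := by
          rw [lintegral_lintegral_swap hkF.aemeasurable]
      _ ≤ ∫⁻ y, D * σ E ^ (1 - 1 / r) * F y ∂μ := by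
          refine lintegral_mono_ae ?_
          filter_upwards [h] with y hy
          have hky : Measurable fun x => k x y := hk.comp measurable_prodMk_right
          rw [lintegral_mul_const _ hky]
          refine mul_le_mul_left ?_ _
          refine mfi_lorentz σ hky hr (by simp) (by simp [hK]) ?_ hEt' hE0
          intro s hs0 hst
          refine (hy s hs0 hst).trans ?_
          exact mul_le_mul_left le_self_add _
      _ = _ := by rw [lintegral_const_mul _ hFm]
  have hp0 : σ E ^ (1 - 1 / r) ≠ 0 := by simp [ENNReal.rpow_eq_zero_iff, hE0, hEt']
  have h1r : 0 ≤ 1 - 1 / r := by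
    have : 1 / r ≤ 1 := by rw [div_le_one hr0]; exact hr.le
    linarith
  have hpt : σ E ^ (1 - 1 / r) ≠ ⊤ := ENNReal.rpow_ne_top_of_nonneg h1r hEt'
  have hsplit : σ E = σ E ^ (1 / r) * σ E ^ (1 - 1 / r) := by
    rw [← ENNReal.rpow_add _ _ hE0 hEt']; simp
  have m2 : σ E ^ (1 / r) ≤ D * A / t := by
    rw [ENNReal.le_div_iff_mul_le (Or.inl ht0) (Or.inl htt)]
    have : (σ E ^ (1 / r) * t) * σ E ^ (1 - 1 / r) ≤ (D * A) * σ E ^ (1 - 1 / r) := by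
      calc _ = t * (σ E ^ (1 / r) * σ E ^ (1 - 1 / r)) := by ring
        _ = t * σ E := by rw [← hsplit]
        _ ≤ _ := main
        _ = _ := by ring
    exact (ENNReal.mul_le_mul_iff_left hp0 hpt).1 this
  calc σ E = (σ E ^ (1 / r)) ^ r := by
        rw [← ENNReal.rpow_mul, one_div, inv_mul_cancel₀ hr0.ne', ENNReal.rpow_one]
    _ ≤ (D * A / t) ^ r := by gcongr
    _ = _ := by rw [mul_div_assoc, ENNReal.mul_rpow_of_nonneg _ _ hr0.le]

/-- the auxiliary weight -/
noncomputable def mfiW {X : Type*} {m : ℕ} (U : Fin m → X → ℝ≥0∞) (Y : X → ℝ≥0∞) (i : Fin m) (x : X) : ℝ≥0∞ :=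
  Y x ^ (1 / (m : ℝ)) * (∏ j ∈ Finset.univ.erase i, U j x ^ (1 / (m : ℝ))) * U i x ^ (1 / (m : ℝ) - 1)

lemma mfiW_measurable {X : Type*} [MeasurableSpace X] {m : ℕ} {U : Fin m → X → ℝ≥0∞} {Y : X → ℝ≥0∞}
    (hU : ∀ j, Measurable (U j)) (hY : Measurable Y) (i : Fin m) : Measurable (mfiW U Y i) := by
  unfold mfiW
  refine ((hY.pow_const _).mul (Finset.measurable_fun_prod _ fun j _ => (hU j).pow_const _)).mul
    ((hU i).pow_const _)

lemma mfi_rpow_ne_zero {a : ℝ≥0∞} (h0 : a ≠ 0) (ht : a ≠ ⊤) (z : ℝ) : a ^ z ≠ 0 := by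
  simp [ENNReal.rpow_eq_zero_iff, h0, ht]

lemma mfi_rpow_ne_top {a : ℝ≥0∞} (h0 : a ≠ 0) (ht : a ≠ ⊤) (z : ℝ) : a ^ z ≠ ⊤ := by
  simp [ENNReal.rpow_eq_top_iff, h0, ht]

lemma mfiW_ne_zero {X : Type*} {m : ℕ} {U : Fin m → X → ℝ≥0∞} {Y : X → ℝ≥0∞}
    (hU0 : ∀ j x, U j x ≠ 0) (hUt : ∀ j x, U j x ≠ ⊤) (hY0 : ∀ x, Y x ≠ 0) (hYt : ∀ x, Y x ≠ ⊤)
    (i : Fin m) (x : X) : mfiW U Y i x ≠ 0 := by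
  unfold mfiW
  refine mul_ne_zero (mul_ne_zero (mfi_rpow_ne_zero (hY0 x) (hYt x) _) ?_)
    (mfi_rpow_ne_zero (hU0 i x) (hUt i x) _)
  exact Finset.prod_ne_zero_iff.2 fun j _ => mfi_rpow_ne_zero (hU0 j x) (hUt j x) _

lemma mfiW_ne_top {X : Type*} {m : ℕ} {U : Fin m → X → ℝ≥0∞} {Y : X → ℝ≥0∞}
    (hU0 : ∀ j x, U j x ≠ 0) (hUt : ∀ j x, U j x ≠ ⊤) (hY0 : ∀ x, Y x ≠ 0) (hYt : ∀ x, Y x ≠ ⊤)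
    (i : Fin m) (x : X) : mfiW U Y i x ≠ ⊤ := by
  unfold mfiW
  refine ENNReal.mul_ne_top (ENNReal.mul_ne_top (mfi_rpow_ne_top (hY0 x) (hYt x) _) ?_)
    (mfi_rpow_ne_top (hU0 i x) (hUt i x) _)
  exact ENNReal.prod_ne_top fun j _ => mfi_rpow_ne_top (hU0 j x) (hUt j x) _

lemma mfiW_ainf {X : Type*} [MeasurableSpace X] (μ : Measure X) [IsProbabilityMeasure μ] {m : ℕ} (hm : 0 < m)
    {U : Fin m → X → ℝ≥0∞} {Y : X → ℝ≥0∞}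
    (hU : ∀ j, Measurable (U j)) (hY : Measurable Y)
    (hU0 : ∀ j x, U j x ≠ 0) (hUt : ∀ j x, U j x ≠ ⊤) (hY0 : ∀ x, Y x ≠ 0) (hYt : ∀ x, Y x ≠ ⊤)
    {C : ℝ≥0∞} (hC : C ≠ ⊤) (hC1 : 1 ≤ C) (hA : ∀ j, ∀ᵐ x ∂μ, ∫⁻ z, U j z ∂μ ≤ C * U j x)
    {C0 : ℝ≥0∞} {δ0 : ℝ} (hδ0 : 0 < δ0)
    (hB : (∫⁻ x, Y x ∂μ) * (∫⁻ x, Y x ^ (-δ0) ∂μ) ^ (1 / δ0) ≤ C0)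
    {δ : ℝ} (hδ : 0 < δ) (hδ1 : 2 * δ ≤ 1) (hδ2 : 2 * δ ≤ δ0) (i : Fin m) :
    (∫⁻ x, mfiW U Y i x ∂μ) * (∫⁻ x, mfiW U Y i x ^ (-δ) ∂μ) ^ (1 / δ) ≤
      C ^ (1 - 1 / (m : ℝ)) * C0 ^ (1 / (m : ℝ)) * ∏ _j ∈ Finset.univ.erase i, C ^ (1 / (m : ℝ)) := by
  set θ : ℝ := 1 / (m : ℝ) with hθ
  have hm0 : (0:ℝ) < m := by exact_mod_cast hm
  have hm1 : (1:ℝ) ≤ m := by exact_mod_cast hm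
  have hθ0 : 0 < θ := by positivity
  have hθ1 : θ ≤ 1 := by rw [hθ, div_le_one hm0]; exact hm1
  have hCz : C ≠ 0 := (lt_of_lt_of_le one_pos hC1).ne'
  set a : Fin m → ℝ≥0∞ := fun j => ∫⁻ z, U j z ∂μ with ha
  set b := ∫⁻ x, Y x ∂μ with hb
  set d := (∫⁻ x, Y x ^ (-δ0) ∂μ) ^ (1 / δ0) with hd
  have ha0 : ∀ j, a j ≠ 0 := fun j => mfi_lint_pos μ (hU j) (hU0 j)
  have hat : ∀ j, a j ≠ ⊤ := by
    intro j
    obtain ⟨x, hx⟩ := (hA j).exists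
    exact (lt_of_le_of_lt hx (ENNReal.mul_lt_top hC.lt_top (hUt j x).lt_top)).ne
  have haC : ∀ j, ∀ᵐ x ∂μ, a j / C ≤ U j x := by
    intro j
    filter_upwards [hA j] with x hx
    exact ENNReal.div_le_of_le_mul' hx
  have haC0 : ∀ j, a j / C ≠ 0 := fun j => ENNReal.div_ne_zero.2 ⟨ha0 j, hC⟩
  have haCt : ∀ j, a j / C ≠ ⊤ := fun j => ENNReal.div_ne_top (hat j) hCz
  have mono_neg : ∀ (x y : ℝ≥0∞) (z : ℝ), 0 ≤ z → x ≤ y → y ^ (-z) ≤ x ^ (-z) := by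
    intro x y z hz hxy
    rw [ENNReal.rpow_neg, ENNReal.rpow_neg]
    exact ENNReal.inv_le_inv.2 (ENNReal.rpow_le_rpow hxy hz)
  have b1 : ∫⁻ x, mfiW U Y i x ∂μ ≤ b ^ θ * (∏ j ∈ Finset.univ.erase i, a j ^ θ) * (a i / C) ^ (θ - 1) := by
    have e1 : ∫⁻ x, Y x ^ θ * (∏ j ∈ Finset.univ.erase i, U j x ^ θ) ∂μ ≤
        b ^ θ * (∏ j ∈ Finset.univ.erase i, a j ^ θ) := by
      have := ENNReal.lintegral_prod_norm_pow_le (μ := μ) Finset.univ (f := Function.update U i Y)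
        (p := fun _ => θ) (fun j _ => by
          by_cases hj : j = i
          · subst hj; simpa using hY.aemeasurable
          · simpa [hj] using (hU j).aemeasurable) (by simp [hθ, hm0.ne']) (fun _ _ => hθ0.le)
      have e2 : ∀ x, ∏ j, (Function.update U i Y j x) ^ θ
          = Y x ^ θ * ∏ j ∈ Finset.univ.erase i, U j x ^ θ := by
        intro x
        rw [← Finset.mul_prod_erase _ _ (Finset.mem_univ i)]
        congr 1
        · simp
        · refine Finset.prod_congr rfl fun j hj => ?_
          simp [Finset.ne_of_mem_erase hj]
      have e3 : ∏ j, (∫⁻ x, Function.update U i Y j x ∂μ) ^ θ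
          = b ^ θ * ∏ j ∈ Finset.univ.erase i, a j ^ θ := by
        rw [← Finset.mul_prod_erase _ _ (Finset.mem_univ i)]
        congr 1
        · simp [hb]
        · refine Finset.prod_congr rfl fun j hj => ?_
          simp [Finset.ne_of_mem_erase hj, ha]
      simp_rw [e2] at this
      rwa [e3] at this
    calc ∫⁻ x, mfiW U Y i x ∂μ
        ≤ ∫⁻ x, (Y x ^ θ * (∏ j ∈ Finset.univ.erase i, U j x ^ θ)) * (a i / C) ^ (θ - 1) ∂μ := by
          refine lintegral_mono_ae ?_
          filter_upwards [haC i] with x hx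
          unfold mfiW
          refine mul_le_mul_right ?_ _
          have := mono_neg _ _ (1 - θ) (by linarith) hx
          rwa [neg_sub] at this
      _ = (∫⁻ x, (Y x ^ θ * (∏ j ∈ Finset.univ.erase i, U j x ^ θ)) ∂μ) * (a i / C) ^ (θ - 1) := by
          rw [lintegral_mul_const]
          exact (hY.pow_const _).mul (Finset.measurable_fun_prod _ fun j _ => (hU j).pow_const _)
      _ ≤ _ := mul_le_mul_left e1 _
  have b2 : ∫⁻ x, mfiW U Y i x ^ (-δ) ∂μ ≤
      (d ^ θ * (∏ j ∈ Finset.univ.erase i, (a j / C) ^ (-θ)) * a i ^ (1 - θ)) ^ δ := by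
    have e1 : ∫⁻ x, Y x ^ (-(δ * θ)) * U i x ^ (δ * (1 - θ)) ∂μ ≤ (d ^ θ * a i ^ (1 - θ)) ^ δ := by
      have h1 := ENNReal.lintegral_mul_norm_pow_le (μ := μ) (f := fun x => Y x ^ (-(2 * δ * θ)))
        (g := fun x => U i x ^ (2 * δ * (1 - θ))) (hY.pow_const _).aemeasurable
        ((hU i).pow_const _).aemeasurable (p := 1/2) (q := 1/2) (by norm_num) (by norm_num) (by norm_num)
      have h2 : ∀ x, (Y x ^ (-(2 * δ * θ))) ^ (1/2:ℝ) * (U i x ^ (2 * δ * (1 - θ))) ^ (1/2:ℝ)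
          = Y x ^ (-(δ * θ)) * U i x ^ (δ * (1 - θ)) := by
        intro x
        rw [← ENNReal.rpow_mul, ← ENNReal.rpow_mul]
        congr 2 <;> ring
      simp_rw [h2] at h1
      refine h1.trans ?_
      have h3 : ∫⁻ x, Y x ^ (-(2 * δ * θ)) ∂μ ≤ d ^ (2 * δ * θ) := by
        have := mfi_jensen μ (f := fun x => Y x ^ (-δ0)) (hY.pow_const _).aemeasurable
          (a := 2 * δ * θ / δ0) (by positivity) (by rw [div_le_one hδ0]; nlinarith)
        rw [hd, ← ENNReal.rpow_mul]
        convert this using 2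
        · ext x
          rw [← ENNReal.rpow_mul]
          congr 1; field_simp
        · ring
      have h4 : ∫⁻ x, U i x ^ (2 * δ * (1 - θ)) ∂μ ≤ a i ^ (2 * δ * (1 - θ)) :=
        mfi_jensen μ (hU i).aemeasurable (by have : 0 ≤ 1 - θ := by linarith
                                             positivity) (by nlinarith)
      calc _ ≤ (d ^ (2 * δ * θ)) ^ (1/2:ℝ) * (a i ^ (2 * δ * (1 - θ))) ^ (1/2:ℝ) := by
            exact mul_le_mul' (ENNReal.rpow_le_rpow h3 (by norm_num)) (ENNReal.rpow_le_rpow h4 (by norm_num))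
        _ = _ := by
          clear_value d
          rw [ENNReal.mul_rpow_of_nonneg _ _ hδ.le]
          simp only [← ENNReal.rpow_mul]
          congr 2 <;> ring
    have hall : ∀ᵐ x ∂μ, ∀ j, a j / C ≤ U j x := ae_all_iff.2 haC
    calc ∫⁻ x, mfiW U Y i x ^ (-δ) ∂μ
        ≤ ∫⁻ x, (∏ j ∈ Finset.univ.erase i, (a j / C) ^ (-θ)) ^ δ * (Y x ^ (-(δ * θ)) * U i x ^ (δ * (1 - θ))) ∂μ := by
          refine lintegral_mono_ae ?_
          filter_upwards [hall] with x hx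
          have hp0 : (∏ j ∈ Finset.univ.erase i, U j x ^ θ) ≠ 0 :=
            Finset.prod_ne_zero_iff.2 fun j _ => mfi_rpow_ne_zero (hU0 j x) (hUt j x) _
          have hpt : (∏ j ∈ Finset.univ.erase i, U j x ^ θ) ≠ ⊤ :=
            ENNReal.prod_ne_top fun j _ => mfi_rpow_ne_top (hU0 j x) (hUt j x) _
          have hYp := mfi_rpow_ne_zero (hY0 x) (hYt x) θ
          have hYpt := mfi_rpow_ne_top (hY0 x) (hYt x) θ
          have hp : (∏ j ∈ Finset.univ.erase i, U j x ^ θ) ^ (-δ) ≤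
              (∏ j ∈ Finset.univ.erase i, (a j / C) ^ (-θ)) ^ δ := by
            have := mono_neg (∏ j ∈ Finset.univ.erase i, (a j / C) ^ θ)
              (∏ j ∈ Finset.univ.erase i, U j x ^ θ) δ hδ.le
              (Finset.prod_le_prod' fun j _ => ENNReal.rpow_le_rpow (hx j) hθ0.le)
            refine this.trans (le_of_eq ?_)
            rw [← ENNReal.prod_rpow_of_nonneg hδ.le, ENNReal.rpow_neg, ← ENNReal.inv_rpow,
              ENNReal.prod_inv_distrib, ← ENNReal.prod_rpow_of_nonneg hδ.le]
            · refine Finset.prod_congr rfl fun j _ => ?_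
              rw [ENNReal.rpow_neg (a j / C)]
            · intro j _ k _ _
              exact Or.inl (mfi_rpow_ne_zero (haC0 j) (haCt j) _)
          unfold mfiW
          rw [ENNReal.mul_rpow_of_ne_zero (mul_ne_zero hYp hp0) (mfi_rpow_ne_zero (hU0 i x) (hUt i x) _),
            ENNReal.mul_rpow_of_ne_zero hYp hp0, ← ENNReal.rpow_mul, ← ENNReal.rpow_mul]
          have e3 : (1 / (m:ℝ) - 1) * -δ = δ * (1 - θ) := by rw [hθ]; ring
          have e4 : 1 / (m:ℝ) * -δ = -(δ * θ) := by rw [hθ]; ring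
          rw [e3, e4]
          calc _ = (∏ j ∈ Finset.univ.erase i, U j x ^ θ) ^ (-δ) * (Y x ^ (-(δ * θ)) * U i x ^ (δ * (1 - θ))) := by
                ring
            _ ≤ _ := mul_le_mul_left hp _
      _ = (∏ j ∈ Finset.univ.erase i, (a j / C) ^ (-θ)) ^ δ * ∫⁻ x, (Y x ^ (-(δ * θ)) * U i x ^ (δ * (1 - θ))) ∂μ := by
          rw [lintegral_const_mul]
          exact (hY.pow_const _).mul ((hU i).pow_const _)
      _ ≤ (∏ j ∈ Finset.univ.erase i, (a j / C) ^ (-θ)) ^ δ * (d ^ θ * a i ^ (1 - θ)) ^ δ :=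
          mul_le_mul_right e1 _
      _ = _ := by
          rw [← ENNReal.mul_rpow_of_nonneg _ _ hδ.le]
          congr 1; ring
  have b3 : (∫⁻ x, mfiW U Y i x ^ (-δ) ∂μ) ^ (1 / δ) ≤
      d ^ θ * (∏ j ∈ Finset.univ.erase i, (a j / C) ^ (-θ)) * a i ^ (1 - θ) := by
    refine (ENNReal.rpow_le_rpow b2 (by positivity)).trans (le_of_eq ?_)
    rw [← ENNReal.rpow_mul, mul_one_div_cancel hδ.ne', ENNReal.rpow_one]
  have key : ∀ j (z : ℝ), 0 ≤ z → a j ^ z * (a j / C) ^ (-z) = C ^ z := by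
    intro j z hz
    rw [ENNReal.rpow_neg, ENNReal.div_rpow_of_nonneg _ _ hz,
      ENNReal.inv_div (Or.inl (mfi_rpow_ne_top hCz hC _)) (Or.inl (mfi_rpow_ne_zero hCz hC _)),
      ENNReal.mul_div_cancel (mfi_rpow_ne_zero (ha0 j) (hat j) _) (mfi_rpow_ne_top (ha0 j) (hat j) _)]
  have k1 : a i ^ (1 - θ) * (a i / C) ^ (θ - 1) = C ^ (1 - θ) := by
    have := key i (1 - θ) (by linarith)
    rwa [neg_sub] at this
  calc _ ≤ (b ^ θ * (∏ j ∈ Finset.univ.erase i, a j ^ θ) * (a i / C) ^ (θ - 1)) *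
        (d ^ θ * (∏ j ∈ Finset.univ.erase i, (a j / C) ^ (-θ)) * a i ^ (1 - θ)) := mul_le_mul' b1 b3
    _ = (a i ^ (1 - θ) * (a i / C) ^ (θ - 1)) * (b ^ θ * d ^ θ) *
        ((∏ j ∈ Finset.univ.erase i, a j ^ θ) * (∏ j ∈ Finset.univ.erase i, (a j / C) ^ (-θ))) := by ring
    _ = C ^ (1 - θ) * (b * d) ^ θ * ∏ j ∈ Finset.univ.erase i, C ^ θ := by
        rw [k1, ← ENNReal.mul_rpow_of_nonneg _ _ hθ0.le, ← Finset.prod_mul_distrib]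
        congr 1
        exact Finset.prod_congr rfl fun j _ => key j θ hθ0.le
    _ ≤ _ := by
        refine mul_le_mul_left (mul_le_mul_right (ENNReal.rpow_le_rpow hB hθ0.le) _) _

lemma mfi_noatoms {n m : ℕ} (hn : 0 < n) (hm : 0 < m) :
    NullSingletonClass (volume : Measure (Fin m → ESp n)) := by
  have : Nonempty (Fin n) := ⟨⟨0, hn⟩⟩
  have : Nonempty (Fin m) := ⟨⟨0, hm⟩⟩
  have : NullSingletonClass (volume : Measure (ESp n)) := by
    refine ⟨fun x => ?_⟩
    have := (PiLp.volume_preserving_ofLp (Fin n)).measure_preimage (s := {x.ofLp})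
      (measurableSet_singleton _).nullMeasurableSet
    rw [measure_singleton] at this
    refine measure_mono_null ?_ this
    intro y hy
    simp only [mem_singleton_iff] at hy
    simp [hy]
  infer_instance

/-- Tonelli for products -/
lemma mfi_tonelli {X : Type*} [MeasureSpace X] [SigmaFinite (volume : Measure X)] :
    ∀ {m : ℕ} (F : Fin m → X → ℝ≥0∞), (∀ i, AEMeasurable (F i)) →
      ∫⁻ y : Fin m → X, ∏ i, F i (y i) = ∏ i, ∫⁻ z, F i z := by
  intro m
  induction m with
  | zero => intro F hF; simp [volume_pi]
  | succ k ih =>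
    intro F hF
    have hmp := volume_preserving_piFinSuccAbove (fun _ : Fin (k + 1) => X) 0
    have e := hmp.lintegral_comp_emb (MeasurableEquiv.measurableEmbedding _)
      (fun p : X × (Fin k → X) => F 0 p.1 * ∏ j, F ((0 : Fin (k+1)).succAbove j) (p.2 j))
    have e2 : ∀ y : Fin (k + 1) → X, ∏ i, F i (y i) =
        F 0 ((MeasurableEquiv.piFinSuccAbove (fun _ : Fin (k + 1) => X) 0) y).1 *
          ∏ j, F ((0 : Fin (k+1)).succAbove j) (((MeasurableEquiv.piFinSuccAbove (fun _ : Fin (k + 1) => X) 0) y).2 j) := by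
      intro y
      rw [Fin.prod_univ_succAbove _ 0]
      rfl
    simp_rw [e2]
    rw [e, Fin.prod_univ_succAbove _ 0, ← ih _ fun j => hF _]
    refine lintegral_prod_mul (hF 0) (g := fun z : Fin k → X => ∏ j, F ((0 : Fin (k+1)).succAbove j) (z j)) ?_
    refine Finset.aemeasurable_fun_prod _ fun j _ => ?_
    exact (hF _).comp_quasiMeasurePreserving (Measure.quasiMeasurePreserving_eval _ j)

/-- measurability of factors -/
lemma mfi_factor {X : Type*} [MeasureSpace X] [SigmaFinite (volume : Measure X)] {m : ℕ} (f : Fin m → X → ℝ)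
    (h : AEStronglyMeasurable (fun y : Fin m → X => ∏ i, f i (y i)) volume) :
    (∀ᵐ y : Fin m → X, ∏ i, f i (y i) = 0) ∨ ∀ i, AEMeasurable (f i) := by
  by_cases h0 : ∀ᵐ y : Fin m → X, ∏ i, f i (y i) = 0
  · exact Or.inl h0
  right
  intro i
  obtain ⟨k, rfl⟩ : ∃ k, m = k + 1 := ⟨m - 1, by have := i.2; omega⟩
  have hmp := volume_preserving_piFinSuccAbove (fun _ : Fin (k + 1) => X) i
  set e := MeasurableEquiv.piFinSuccAbove (fun _ : Fin (k + 1) => X) i with he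
  set g : (Fin k → X) → ℝ := fun z => ∏ j, f (i.succAbove j) (z j) with hg
  have e2 : ∀ y : Fin (k + 1) → X, ∏ j, f j (y j) = f i (e y).1 * g (e y).2 := by
    intro y
    rw [Fin.prod_univ_succAbove _ i]
    rfl
  have h1 : AEStronglyMeasurable (fun p : X × (Fin k → X) => f i p.1 * g p.2) (volume.prod volume) := by
    have := (hmp.aestronglyMeasurable_comp_iff e.measurableEmbedding
      (g := fun p : X × (Fin k → X) => f i p.1 * g p.2)).1
    apply this
    simp_rw [e2] at h
    exact h
  have h2 := h1.prod_swap.prodMk_left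
  by_contra hn
  apply h0
  have h3 : ∀ᵐ z : Fin k → X, g z = 0 := by
    filter_upwards [h2] with z hz
    by_contra hgz
    apply hn
    have hz' : AEMeasurable (fun x => f i x * g z) volume := hz.aemeasurable
    have := hz'.mul_const (g z)⁻¹
    refine this.congr (Filter.Eventually.of_forall fun x => ?_)
    simp [hgz]
  have h4 : ∀ᵐ p : X × (Fin k → X) ∂(volume.prod volume), g p.2 = 0 :=
    Measure.quasiMeasurePreserving_snd.ae h3
  have h5 : ∀ᵐ y : Fin (k + 1) → X, g (e y).2 = 0 := hmp.quasiMeasurePreserving.ae h4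
  filter_upwards [h5] with y hy
  rw [e2, hy, mul_zero]

lemma mfi_measurable_or {n m : ℕ} (hn : 0 < n) (hm : 0 < m) {α : ℝ}
    (f : Fin m → ESp n → ℝ) :
    (∀ x, multiIα α f x = 0) ∨ ∀ i, AEMeasurable (f i) := by
  by_cases h : ∀ x, multiIα α f x = 0
  · exact Or.inl h
  push Not at h
  obtain ⟨x, hx⟩ := h
  right
  unfold multiIα at hx
  set ρ : (Fin m → ESp n) → ℝ := fun y => (∑ i, dist x (y i)) ^ ((m : ℝ) * (n : ℝ) - α) with hρ
  have hIntg : Integrable (fun y : Fin m → ESp n => (∏ i, f i (y i)) / ρ y) := by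
    by_contra hcon
    exact hx (integral_undef hcon)
  have := mfi_noatoms hn hm
  have hρm : Measurable ρ := by
    refine Measurable.pow_const ?_ _
    refine Finset.measurable_fun_sum _ fun i _ => ?_
    exact measurable_const.dist (measurable_pi_apply i)
  have hne : ∀ᵐ y : Fin m → ESp n, ρ y ≠ 0 := by
    have : ∀ᵐ y : Fin m → ESp n, y ≠ fun _ => x := by
      simp [ae_iff]
    filter_upwards [this] with y hy
    have hpos : 0 < ∑ i, dist x (y i) := by
      obtain ⟨i, hi⟩ := Function.ne_iff.1 hy
      refine Finset.sum_pos' (fun _ _ => dist_nonneg) ⟨i, Finset.mem_univ _, dist_pos.2 (Ne.symm hi)⟩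
    exact (Real.rpow_pos_of_pos hpos _).ne'
  have hprod : AEStronglyMeasurable (fun y : Fin m → ESp n => ∏ i, f i (y i)) volume := by
    refine (hIntg.aestronglyMeasurable.mul hρm.aestronglyMeasurable).congr ?_
    filter_upwards [hne] with y hy
    simp [hy]
  rcases mfi_factor f hprod with h0 | h0
  · exfalso
    apply hx
    refine integral_eq_zero_of_ae ?_
    filter_upwards [h0] with y hy
    simp [hy]
  · exact h0

/-- pointwise bound for the multilinear integral -/
lemma mfi_point {n m : ℕ} (hm : 0 < m) {α : ℝ} (hα : α < (m : ℝ) * (n : ℝ))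
    (f : Fin m → ESp n → ℝ) (hf : ∀ i, AEMeasurable (f i)) (x : ESp n) :
    ENNReal.ofReal |multiIα α f x| ≤
      ∏ i, ∫⁻ y, ENNReal.ofReal |f i y| * edist x.ofLp y.ofLp ^ (-(((m : ℝ) * (n : ℝ) - α) / m)) := by
  set p := (m : ℝ) * (n : ℝ) - α with hp
  have hp0 : 0 < p := by linarith
  have hm0 : (0:ℝ) < m := by exact_mod_cast hm
  have hof : Measurable fun y : ESp n => y.ofLp := (PiLp.volume_preserving_ofLp (Fin n)).measurable
  rw [← mfi_tonelli]
  · unfold multiIα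
    rw [← Real.norm_eq_abs, ofReal_norm]
    refine (enorm_integral_le_lintegral_enorm _).trans (lintegral_mono fun y => ?_)
    rw [← hp, ← ofReal_norm, Real.norm_eq_abs, abs_div, Finset.abs_prod]
    have hs0 : 0 ≤ ∑ i, dist x (y i) := Finset.sum_nonneg fun _ _ => dist_nonneg
    rw [Finset.prod_mul_distrib]
    rcases hs0.eq_or_lt with hs | hs
    · rw [← hs, Real.zero_rpow hp0.ne']; simp
    · have hsp := Real.rpow_pos_of_pos hs p
      rw [abs_of_pos hsp, ENNReal.ofReal_div_of_pos hsp, ENNReal.ofReal_prod_of_nonneg (fun _ _ => abs_nonneg _),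
        ENNReal.div_eq_inv_mul, mul_comm, ← ENNReal.ofReal_rpow_of_pos hs]
      refine mul_le_mul_right ?_ _
      have : ∀ i, (ENNReal.ofReal (∑ i, dist x (y i))) ^ (-(p / m)) ≤ edist x.ofLp (y i).ofLp ^ (-(p / m)) := by
        intro i
        rw [ENNReal.rpow_neg, ENNReal.rpow_neg]
        refine ENNReal.inv_le_inv.2 (ENNReal.rpow_le_rpow ?_ (by positivity))
        rw [edist_dist]
        refine ENNReal.ofReal_le_ofReal (le_trans ?_ (Finset.single_le_sum (f := fun i => dist x (y i)) (fun _ _ => dist_nonneg) (Finset.mem_univ i)))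
        rw [dist_pi_le_iff dist_nonneg]
        intro j
        have := PiLp.norm_apply_le (x - y i) j
        rw [dist_eq_norm, dist_eq_norm]
        exact this
      calc _ = ∏ _i : Fin m, (ENNReal.ofReal (∑ i, dist x (y i))) ^ (-(p / m)) := by
            rw [Finset.prod_const, Finset.card_univ, Fintype.card_fin, ← ENNReal.rpow_natCast,
              ← ENNReal.rpow_mul, ← ENNReal.rpow_neg]
            congr 1; field_simp
        _ ≤ _ := Finset.prod_le_prod' fun i _ => this i
  · intro i
    refine AEMeasurable.mul ?_ ?_
    · exact (hf i).norm.ennreal_ofReal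
    · exact (Measurable.pow_const (measurable_const.edist hof) _).aemeasurable

lemma mfi_toLp_mp (n : ℕ) : MeasurePreserving (fun z : Fin n → ℝ => (WithLp.toLp 2 z : ESp n)) volume volume :=
  PiLp.volume_preserving_toLp (Fin n)

lemma mfi_toLp_emb (n : ℕ) : MeasurableEmbedding (fun z : Fin n → ℝ => (WithLp.toLp 2 z : ESp n)) :=
  (MeasurableEquiv.toLp 2 (Fin n → ℝ)).measurableEmbedding

lemma mfi_cube {n : ℕ} (c : Fin n → ℝ) {R : ℝ} (hR : 0 < R) :
    ∃ Q : Set (ESp n), IsCube Q ∧ (fun z : Fin n → ℝ => (WithLp.toLp 2 z : ESp n)) ⁻¹' Q = Metric.closedBall c R := by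
  refine ⟨{x : ESp n | ∀ i, c i - R ≤ x i ∧ x i ≤ c i - R + 2 * R}, ⟨fun i => c i - R, 2 * R, by positivity, rfl⟩, ?_⟩
  ext z
  simp only [mem_preimage, Set.mem_ofPred_eq, Metric.mem_closedBall, dist_pi_le_iff hR.le, Real.dist_eq, abs_le]
  refine forall_congr' fun i => ?_
  constructor
  · rintro ⟨h1, h2⟩; constructor <;> linarith
  · rintro ⟨h1, h2⟩; constructor <;> linarith

lemma mfi_A1_of {n : ℕ} {w : ESp n → ℝ} (h : IsA1 w) :
    ∃ C : ℝ≥0∞, C ≠ ⊤ ∧ 1 ≤ C ∧ MfiA1 (fun z : Fin n → ℝ => ENNReal.ofReal (w (WithLp.toLp 2 z))) C := by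
  obtain ⟨C, hC, hA⟩ := h
  refine ⟨C + 1, by simp [hC.ne], le_add_self, ?_⟩
  intro c R hR
  obtain ⟨Q, hQ, hpre⟩ := mfi_cube c hR
  have h1 := hA Q hQ
  have h2 : ∀ᵐ x ∂(volume.restrict Q), essInf (fun x => ENNReal.ofReal (w x)) (volume.restrict Q)
      ≤ ENNReal.ofReal (w x) := ae_essInf_le
  have h3 := ((mfi_toLp_mp n).restrict_preimage_emb (mfi_toLp_emb n) Q).quasiMeasurePreserving.ae h2
  have hv := (mfi_toLp_mp n).measure_preimage_emb (mfi_toLp_emb n) Q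
  have hw := (mfi_toLp_mp n).setLIntegral_comp_preimage_emb (mfi_toLp_emb n) (fun x => ENNReal.ofReal (w x)) Q
  rw [hpre] at h3 hv hw
  rw [wMeas, ← hw, ← hv] at h1
  have hv0 := mfi_vol_ball_pos c hR
  have hvt := mfi_vol_ball_top c hR
  filter_upwards [h3] with z hz
  have h4 := mul_le_mul_right h1 (volume (Metric.closedBall c R))
  rw [← mul_assoc, ENNReal.mul_inv_cancel hv0 hvt, one_mul] at h4
  refine h4.trans ?_
  calc _ ≤ volume (Metric.closedBall c R) * ((C + 1) * ENNReal.ofReal (w (WithLp.toLp 2 z))) := by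
        refine mul_le_mul_right (mul_le_mul' le_self_add hz) _
    _ = _ := by ring

lemma mfi_A1_avg {n : ℕ} {U : (Fin n → ℝ) → ℝ≥0∞} {C : ℝ≥0∞} (h : MfiA1 U C) (c : Fin n → ℝ) {R : ℝ} (hR : 0 < R) :
    ∀ᵐ x ∂(mfiAvg c R), ∫⁻ z, U z ∂(mfiAvg c R) ≤ C * U x := by
  have hv0 := mfi_vol_ball_pos c hR
  have hvt := mfi_vol_ball_top c hR
  have hac : mfiAvg c R ≪ volume.restrict (Metric.closedBall c R) := by
    unfold mfiAvg
    exact Measure.smul_absolutelyContinuous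
  filter_upwards [hac.ae_le (h c R hR)] with x hx
  rw [mfiAvg_lintegral, ← ENNReal.div_eq_inv_mul]
  refine ENNReal.div_le_of_le_mul (hx.trans (le_of_eq ?_))
  ring

lemma mfi_Ainf_of {n : ℕ} {w : ESp n → ℝ} (hw : Measurable w) (hpos : ∀ x, 0 < w x) (h : IsAinfty w) :
    ∃ (δ : ℝ) (C : ℝ≥0∞), 0 < δ ∧ C ≠ ⊤ ∧ 
      MfiAinf (fun z : Fin n → ℝ => ENNReal.ofReal (w (WithLp.toLp 2 z))) δ C := by
  rcases h with h | ⟨p, hp, C, hC, hA⟩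
  · obtain ⟨C, hC, hC1, hA⟩ := mfi_A1_of h
    refine ⟨1, C, one_pos, hC, ?_⟩
    intro c R hR
    have := mfiAvg_prob c hR
    have h1 := mfi_A1_avg hA c hR
    set U : (Fin n → ℝ) → ℝ≥0∞ := fun z => ENNReal.ofReal (w (WithLp.toLp 2 z)) with hU
    have hUm : Measurable U := (hw.comp (mfi_toLp_mp n).measurable).ennreal_ofReal
    have hU0 : ∀ x, U x ≠ 0 := fun x => by simp [hU, hpos]
    have hUt : ∀ x, U x ≠ ⊤ := fun x => by simp [hU]
    rw [div_one, ENNReal.rpow_one]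
    rw [← lintegral_const_mul _ (hUm.pow_const _)]
    calc _ ≤ ∫⁻ x, C ∂(mfiAvg c R) := by
          refine lintegral_mono_ae ?_
          filter_upwards [h1] with x hx
          rw [ENNReal.rpow_neg_one]
          calc _ ≤ C * U x * (U x)⁻¹ := mul_le_mul_left hx _
            _ = C := by rw [mul_assoc, ENNReal.mul_inv_cancel (hU0 x) (hUt x), mul_one]
      _ = C := by simp
  · have hp1 : 0 < p - 1 := by linarith
    refine ⟨1 / (p - 1), C, by positivity, hC.ne, ?_⟩
    intro c R hR
    obtain ⟨Q, hQ, hpre⟩ := mfi_cube c hR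
    have h1 := hA Q hQ
    have hv := (mfi_toLp_mp n).measure_preimage_emb (mfi_toLp_emb n) Q
    have hw1 := (mfi_toLp_mp n).setLIntegral_comp_preimage_emb (mfi_toLp_emb n) (fun x => ENNReal.ofReal (w x)) Q
    have hw2 := (mfi_toLp_mp n).setLIntegral_comp_preimage_emb (mfi_toLp_emb n)
      (fun x => ENNReal.ofReal (w x) ^ (1 - p / (p - 1))) Q
    rw [hpre] at hv hw1 hw2
    rw [wMeas, ← hw1, ← hw2, ← hv] at h1
    rw [mfiAvg_lintegral, mfiAvg_lintegral, one_div_one_div]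
    have e : -(1 / (p - 1)) = 1 - p / (p - 1) := by field_simp; ring
    rw [e]
    exact h1

lemma mfi_kernel_E {n : ℕ} (hn : 0 < n) {U W : ESp n → ℝ≥0∞} (hU : Measurable U) (hW : Measurable W)
    (hUt : ∀ x, U x ≠ ⊤) (h0 : ∀ x, W x ≠ 0) (ht : ∀ x, W x ≠ ⊤)
    {C1 : ℝ≥0∞} (hC1t : C1 ≠ ⊤) (hC11 : 1 ≤ C1) (hA1 : MfiA1 (fun z => U (WithLp.toLp 2 z)) C1)
    {δ : ℝ} (hδ : 0 < δ) (hδ1 : δ ≤ 1)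
    {C : ℝ≥0∞} (hC : C ≠ ⊤) (hC1 : 1 ≤ C) (h : MfiAinf (fun z => W (WithLp.toLp 2 z)) δ C) :
    ∃ K : ℝ≥0∞, K ≠ ⊤ ∧ ∀ᵐ y : ESp n, ∀ s : ℝ≥0∞, s ≠ 0 → s ≠ ⊤ →
      ∫⁻ x in {x : ESp n | W x * edist x.ofLp y.ofLp ^ n < s}, U x * W x ≤ K * U y * s := by
  obtain ⟨K, hK, hae⟩ := mfi_kernel hn (hU.comp (mfi_toLp_mp n).measurable) (hW.comp (mfi_toLp_mp n).measurable)
    (fun x => hUt _) (fun x => h0 _) (fun x => ht _) hC1t hC11 hA1 hδ hδ1 hC hC1 h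
  refine ⟨K, hK, ?_⟩
  have h2 := (PiLp.volume_preserving_ofLp (Fin n)).quasiMeasurePreserving.ae hae
  filter_upwards [h2] with y hy s hs hst
  have h3 := hy s hs hst
  rw [← (mfi_toLp_mp n).setLIntegral_comp_preimage_emb (mfi_toLp_emb n)]
  exact h3

lemma mfiW_mul {X : Type*} {m : ℕ} {U : Fin m → X → ℝ≥0∞} {Y : X → ℝ≥0∞}
    (hU0 : ∀ j x, U j x ≠ 0) (hUt : ∀ j x, U j x ≠ ⊤) (i : Fin m) (x : X) :
    U i x * mfiW U Y i x = Y x ^ (1 / (m : ℝ)) * ∏ j, U j x ^ (1 / (m : ℝ)) := by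
  unfold mfiW
  rw [← Finset.mul_prod_erase _ _ (Finset.mem_univ i), ENNReal.rpow_sub _ _ (hU0 i x) (hUt i x), ENNReal.rpow_one,
    ENNReal.div_eq_inv_mul]
  calc _ = (U i x * (U i x)⁻¹) * (Y x ^ (1 / (m : ℝ)) * ((U i x ^ (1 / (m : ℝ))) * (∏ j ∈ Finset.univ.erase i, U j x ^ (1 / (m : ℝ))))) := by ring
    _ = _ := by rw [ENNReal.mul_inv_cancel (hU0 i x) (hUt i x), one_mul]

lemma mfiW_prod {X : Type*} {m : ℕ} (hm : 0 < m) {U : Fin m → X → ℝ≥0∞} {Y : X → ℝ≥0∞}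
    (hU0 : ∀ j x, U j x ≠ 0) (hUt : ∀ j x, U j x ≠ ⊤) (x : X) :
    ∏ i, mfiW U Y i x = Y x := by
  have h1 : ∏ i, (U i x * mfiW U Y i x) = Y x * ∏ i, U i x := by
    simp_rw [mfiW_mul hU0 hUt]
    rw [Finset.prod_const, Finset.card_univ, Fintype.card_fin, ← ENNReal.rpow_natCast,
      ENNReal.mul_rpow_of_nonneg _ _ (by positivity), ← ENNReal.prod_rpow_of_nonneg (by positivity)]
    have hm0 : (m:ℝ) ≠ 0 := by positivity
    simp_rw [← ENNReal.rpow_mul, one_div_mul_cancel hm0, ENNReal.rpow_one]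
  rw [Finset.prod_mul_distrib, mul_comm] at h1
  have p0 : ∏ i, U i x ≠ 0 := Finset.prod_ne_zero_iff.2 fun i _ => hU0 i x
  have pt : ∏ i, U i x ≠ ⊤ := ENNReal.prod_ne_top fun i _ => hUt i x
  exact (ENNReal.mul_left_inj p0 pt).1 h1

lemma mfi_linear {n : ℕ} (u W : ESp n → ℝ≥0∞) (hu : Measurable u) (hW : Measurable W)
    (hu0 : ∀ x, u x ≠ 0) (hut : ∀ x, u x ≠ ⊤) (hW0 : ∀ x, W x ≠ 0) (hWt : ∀ x, W x ≠ ⊤)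
    {r : ℝ} (hr : 1 < r) {K : ℝ≥0∞} (hK : K ≠ ⊤)
    (h : ∀ᵐ y : ESp n, ∀ s : ℝ≥0∞, s ≠ 0 → s ≠ ⊤ →
      ∫⁻ x in {x : ESp n | W x * edist x.ofLp y.ofLp ^ n < s}, u x ^ r * W x ≤ K * u y ^ r * s) :
    ∃ C : ℝ≥0∞, C ≠ ⊤ ∧ ∀ g : ESp n → ℝ≥0∞, AEMeasurable g → ∀ t : ℝ≥0∞, t ≠ 0 → t ≠ ⊤ →
      (volume.withDensity fun x => u x ^ r * W x)
        {x | t < W x ^ (-(1 / r)) * ∫⁻ y, g y * edist x.ofLp y.ofLp ^ (-(n / r))} ≤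
          C * ((∫⁻ y, g y * u y) / t) ^ r := by
  have hr0 : 0 < r := by linarith
  have hof : Measurable fun y : ESp n => y.ofLp := (PiLp.volume_preserving_ofLp (Fin n)).measurable
  have : SigmaFinite (volume.withDensity fun x => u x ^ r * W x) := by
    refine SigmaFinite.withDensity_of_ne_top (Filter.Eventually.of_forall fun x => ?_)
    exact ENNReal.mul_ne_top (mfi_rpow_ne_top (hu0 x) (hut x) _) (hWt x)
  set k : ESp n → ESp n → ℝ≥0∞ := fun x y =>
    W x ^ (-(1 / r)) * edist x.ofLp y.ofLp ^ (-(n / r)) * (u y)⁻¹ with hk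
  have hkm : Measurable (Function.uncurry k) := by
    refine Measurable.mul (Measurable.mul ?_ ?_) ?_
    · exact (hW.comp measurable_fst).pow_const _
    · exact ((hof.comp measurable_fst).edist (hof.comp measurable_snd)).pow_const _
    · exact (hu.comp measurable_snd).inv
  have hweak : ∀ᵐ y : ESp n, ∀ s : ℝ≥0∞, s ≠ 0 → s ≠ ⊤ →
      (volume.withDensity fun x => u x ^ r * W x) {x | s < k x y} ≤ K * s ^ (-r) := by
    filter_upwards [h] with y hy s hs hst
    have hsu0 : s * u y ≠ 0 := mul_ne_zero hs (hu0 y)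
    have hsut : s * u y ≠ ⊤ := ENNReal.mul_ne_top hst (hut y)
    have hsub : {x | s < k x y} ⊆ {x : ESp n | W x * edist x.ofLp y.ofLp ^ n < (s * u y) ^ (-r)} := by
      intro x hx
      simp only [Set.mem_ofPred_eq, hk] at hx ⊢
      rw [← ENNReal.div_eq_inv_mul.trans (mul_comm _ _), ENNReal.lt_div_iff_mul_lt (Or.inl (hu0 y)) (Or.inl (hut y))] at hx
      have e : W x ^ (-(1 / r)) * edist x.ofLp y.ofLp ^ (-(n / r)) = ((W x * edist x.ofLp y.ofLp ^ n) ^ (1 / r))⁻¹ := by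
        rw [ENNReal.mul_rpow_of_nonneg _ _ (by positivity), ENNReal.mul_inv
          (Or.inl (mfi_rpow_ne_zero (hW0 x) (hWt x) _)) (Or.inl (mfi_rpow_ne_top (hW0 x) (hWt x) _)),
          ENNReal.rpow_neg, ENNReal.rpow_neg, ← ENNReal.rpow_natCast, ← ENNReal.rpow_mul, mul_one_div]
      rw [e] at hx
      have h2 := ENNReal.rpow_lt_rpow hx hr0
      rw [ENNReal.inv_rpow, ← ENNReal.rpow_mul, one_div_mul_cancel hr0.ne', ENNReal.rpow_one] at h2
      rw [ENNReal.rpow_neg]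
      exact ENNReal.lt_inv_iff_lt_inv.1 h2
    rw [withDensity_apply' _ _]
    refine (lintegral_mono_set hsub).trans ((hy _ (mfi_rpow_ne_zero hsu0 hsut _) (mfi_rpow_ne_top hsu0 hsut _)).trans (le_of_eq ?_))
    rw [ENNReal.mul_rpow_of_ne_zero hs (hu0 y)]
    calc _ = K * s ^ (-r) * (u y ^ r * u y ^ (-r)) := by ring
      _ = _ := by
        rw [ENNReal.rpow_neg (u y), ENNReal.mul_inv_cancel (mfi_rpow_ne_zero (hu0 y) (hut y) _) (mfi_rpow_ne_top (hu0 y) (hut y) _),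
          mul_one]
  obtain ⟨C, hC, hmain⟩ := mfi_weak (volume.withDensity fun x => u x ^ r * W x) (volume : Measure (ESp n)) hkm hr hK hweak
  refine ⟨C, hC, fun g hg t ht0 htt => ?_⟩
  have := hmain (fun y => g y * u y) (hg.mul hu.aemeasurable) t ht0 htt
  convert this using 5 with x
  rw [← lintegral_const_mul' _ _ (mfi_rpow_ne_top (hW0 x) (hWt x) _)]
  refine lintegral_congr fun y => ?_
  simp only [hk]
  calc _ = W x ^ (-(1 / r)) * edist x.ofLp y.ofLp ^ (-(n / r)) * g y * ((u y)⁻¹ * u y) := by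
        rw [ENNReal.inv_mul_cancel (hu0 y) (hut y)]; ring
    _ = _ := by ring

lemma mfi_prod_level {X : Type*} [MeasurableSpace X] (σ : Measure X) {m : ℕ} (hm : 0 < m) {q : ℝ} (hq : 0 < q)
    (G : Fin m → X → ℝ≥0∞) (A C : Fin m → ℝ≥0∞) (hA0 : ∀ i, A i ≠ 0) (hAt : ∀ i, A i ≠ ⊤)
    (h : ∀ i, ∀ t : ℝ≥0∞, t ≠ 0 → t ≠ ⊤ → σ {x | t < G i x} ≤ C i * (A i / t) ^ ((m : ℝ) * q))
    (T : ℝ≥0∞) (hT0 : T ≠ 0) (hTt : T ≠ ⊤) :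
    σ {x | T < ∏ i, G i x} ≤ (∑ i, C i) * ((∏ i, A i) / T) ^ q := by
  have hm0 : (0:ℝ) < m := by exact_mod_cast hm
  set P := ∏ i, A i with hP
  have hP0 : P ≠ 0 := Finset.prod_ne_zero_iff.2 fun i _ => hA0 i
  have hPt : P ≠ ⊤ := ENNReal.prod_ne_top fun i _ => hAt i
  have hr0 : T / P ≠ 0 := ENNReal.div_ne_zero.2 ⟨hT0, hPt⟩
  have hrt : T / P ≠ ⊤ := ENNReal.div_ne_top hTt hP0
  set l := (T / P) ^ (1 / (m : ℝ)) with hl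
  have hl0 : l ≠ 0 := mfi_rpow_ne_zero hr0 hrt _
  have hlt : l ≠ ⊤ := mfi_rpow_ne_top hr0 hrt _
  have hprod : ∏ i, (A i * l) = T := by
    rw [Finset.prod_mul_distrib, Finset.prod_const, Finset.card_univ, Fintype.card_fin, ← ENNReal.rpow_natCast, hl,
      ← ENNReal.rpow_mul, one_div_mul_cancel hm0.ne', ENNReal.rpow_one, ← hP, ENNReal.mul_div_cancel hP0 hPt]
  have hsub : {x | T < ∏ i, G i x} ⊆ ⋃ i, {x | A i * l < G i x} := by
    intro x hx
    by_contra hcon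
    simp only [mem_iUnion, Set.mem_ofPred_eq, not_exists, not_lt] at hcon hx
    have := Finset.prod_le_prod' (s := Finset.univ) fun i _ => hcon i
    rw [hprod] at this
    exact absurd hx (not_lt.2 this)
  refine (measure_mono hsub).trans ((measure_iUnion_fintype_le _ _).trans ?_)
  rw [Finset.sum_mul]
  refine Finset.sum_le_sum fun i _ => ?_
  refine (h i (A i * l) (mul_ne_zero (hA0 i) hl0) (ENNReal.mul_ne_top (hAt i) hlt)).trans (le_of_eq ?_)
  congr 1
  have e : A i / (A i * l) = l⁻¹ := by
    rw [ENNReal.div_eq_inv_mul, ENNReal.mul_inv (Or.inl (hA0 i)) (Or.inl (hAt i))]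
    calc _ = (A i)⁻¹ * A i * l⁻¹ := by ring
      _ = _ := by rw [ENNReal.inv_mul_cancel (hA0 i) (hAt i), one_mul]
  rw [e, hl, ← ENNReal.inv_rpow, ENNReal.inv_div (Or.inl hPt) (Or.inl hP0), ← ENNReal.rpow_mul]
  congr 1
  field_simp

lemma mfi_main_pos {n m : ℕ} (hn : 0 < n) (hm : 0 < m)
    (α q : ℝ) (hα0 : 0 < α) (hα : α < (m : ℝ) * (n : ℝ))
    (hq : q = (n : ℝ) / ((m : ℝ) * (n : ℝ) - α))
    (u : Fin m → ESp n → ℝ) (v : ESp n → ℝ)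
    (hu : ∀ i, Measurable (u i)) (hv : Measurable v) (hup : ∀ i x, 0 < u i x) (hvp : ∀ x, 0 < v x)
    (hA1 : ∀ i, IsA1 (fun x => u i x ^ ((m : ℝ) * q)))
    (hAinf : IsAinfty (fun x => v x ^ ((m : ℝ) * q))) :
    ∃ C : ℝ≥0∞, C < ⊤ ∧
      ∀ f : Fin m → ESp n → ℝ,
        wnorm (fun x => ENNReal.ofReal |multiIα α f x| / ENNReal.ofReal (v x)) q
            (fun x => (∏ i, u i x ^ q) * v x ^ q)
          ≤ C * ∏ i, L1norm (f i) (u i) := by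
  have hm0 : (0:ℝ) < m := by exact_mod_cast hm
  have hn0 : (0:ℝ) < n := by exact_mod_cast hn
  have hp0 : 0 < (m : ℝ) * (n : ℝ) - α := by linarith
  have hq0 : 0 < q := by rw [hq]; positivity
  set r : ℝ := (m : ℝ) * q with hr
  have hr1 : 1 < r := by
    rw [hr, hq, ← mul_div_assoc, one_lt_div hp0]; linarith
  have hr0 : 0 < r := by linarith
  have hexp : ((m : ℝ) * (n : ℝ) - α) / m = n / r := by
    rw [hr, hq]; field_simp
  have hrm : r * (1 / (m:ℝ)) = q := by rw [hr]; field_simp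
  set U : Fin m → ESp n → ℝ≥0∞ := fun i x => ENNReal.ofReal (u i x) ^ r with hU
  set Y : ESp n → ℝ≥0∞ := fun x => ENNReal.ofReal (v x) ^ r with hY
  have hUe : ∀ i x, ENNReal.ofReal (u i x ^ r) = U i x := fun i x =>
    (ENNReal.ofReal_rpow_of_pos (hup i x)).symm
  have hYe : ∀ x, ENNReal.ofReal (v x ^ r) = Y x := fun x => (ENNReal.ofReal_rpow_of_pos (hvp x)).symm
  have hu0 : ∀ i x, ENNReal.ofReal (u i x) ≠ 0 := fun i x => by simp [hup i x]
  have hv0 : ∀ x, ENNReal.ofReal (v x) ≠ 0 := fun x => by simp [hvp x]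
  have hU0 : ∀ i x, U i x ≠ 0 := fun i x => mfi_rpow_ne_zero (hu0 i x) ENNReal.ofReal_ne_top _
  have hUt : ∀ i x, U i x ≠ ⊤ := fun i x => mfi_rpow_ne_top (hu0 i x) ENNReal.ofReal_ne_top _
  have hY0 : ∀ x, Y x ≠ 0 := fun x => mfi_rpow_ne_zero (hv0 x) ENNReal.ofReal_ne_top _
  have hYt : ∀ x, Y x ≠ ⊤ := fun x => mfi_rpow_ne_top (hv0 x) ENNReal.ofReal_ne_top _
  have hUm : ∀ i, Measurable (U i) := fun i => (hu i).ennreal_ofReal.pow_const _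
  have hYm : Measurable Y := hv.ennreal_ofReal.pow_const _
  choose c hct hc1 hcA using fun i => mfi_A1_of (hA1 i)
  simp only [hUe] at hcA
  obtain ⟨δ0, C0, hδ0, hC0, hB⟩ := mfi_Ainf_of (hv.pow_const _) (fun x => Real.rpow_pos_of_pos (hvp x) r) hAinf
  simp only [hYe] at hB
  set C1 : ℝ≥0∞ := 1 + ∑ i, c i with hC1
  have hC1t : C1 ≠ ⊤ := by simp [hC1, ENNReal.sum_eq_top, hct]
  have hC11 : 1 ≤ C1 := le_self_add
  have hcC1 : ∀ i, c i ≤ C1 := fun i =>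
    (Finset.single_le_sum (f := c) (fun _ _ => by simp) (Finset.mem_univ i)).trans le_add_self
  set δ : ℝ := min (1 / 2) (δ0 / 2) with hδ
  have hδp : 0 < δ := by positivity
  have hδ1 : 2 * δ ≤ 1 := by have := min_le_left (1/2:ℝ) (δ0 / 2); linarith
  have hδ2 : 2 * δ ≤ δ0 := by have := min_le_right (1/2:ℝ) (δ0 / 2); linarith
  set W : Fin m → ESp n → ℝ≥0∞ := fun i => mfiW U Y i with hW
  have hWm : ∀ i, Measurable (W i) := fun i => mfiW_measurable hUm hYm i
  have hW0 : ∀ i x, W i x ≠ 0 := mfiW_ne_zero hU0 hUt hY0 hYt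
  have hWt : ∀ i x, W i x ≠ ⊤ := mfiW_ne_top hU0 hUt hY0 hYt
  have hkern : ∀ i, ∃ K : ℝ≥0∞, K ≠ ⊤ ∧ ∀ᵐ y : ESp n, ∀ s : ℝ≥0∞, s ≠ 0 → s ≠ ⊤ →
      ∫⁻ x in {x : ESp n | W i x * edist x.ofLp y.ofLp ^ n < s}, U i x * W i x ≤ K * U i y * s := by
    intro i
    set D : ℝ≥0∞ := C1 ^ (1 - 1 / (m : ℝ)) * C0 ^ (1 / (m : ℝ)) * ∏ _j ∈ Finset.univ.erase i, C1 ^ (1 / (m : ℝ)) with hD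
    have hC1z : C1 ≠ 0 := (lt_of_lt_of_le one_pos hC11).ne'
    have hDt : D ≠ ⊤ := by
      refine ENNReal.mul_ne_top (ENNReal.mul_ne_top (mfi_rpow_ne_top hC1z hC1t _) ?_) ?_
      · exact ENNReal.rpow_ne_top_of_nonneg (by positivity) hC0
      · exact ENNReal.prod_ne_top fun _ _ => mfi_rpow_ne_top hC1z hC1t _
    refine mfi_kernel_E hn (hUm i) (hWm i) (hUt i) (hW0 i) (hWt i) (hct i) (hc1 i) (hcA i) hδp (by linarith)
      (C := D + 1) (by simp [hDt]) le_add_self ?_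
    intro z R hR
    have := mfiAvg_prob z hR
    refine le_trans ?_ (le_self_add (a := D) (b := 1))
    exact mfiW_ainf (mfiAvg z R) hm (U := fun j z => U j (WithLp.toLp 2 z)) (Y := fun z => Y (WithLp.toLp 2 z))
      (fun j => (hUm j).comp (mfi_toLp_mp n).measurable) (hYm.comp (mfi_toLp_mp n).measurable)
      (fun j x => hU0 j _) (fun j x => hUt j _) (fun x => hY0 _) (fun x => hYt _) hC1t hC11
      (fun j => by
        filter_upwards [mfi_A1_avg (hcA j) z hR] with x hx
        exact hx.trans (mul_le_mul_left (hcC1 j) _)) hδ0 (hB z R hR) hδp hδ1 hδ2 i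
  set σ : Measure (ESp n) := volume.withDensity fun x => ENNReal.ofReal ((∏ i, u i x ^ q) * v x ^ q) with hσ
  have hdens : ∀ i x, ENNReal.ofReal ((∏ i, u i x ^ q) * v x ^ q) = U i x * W i x := by
    intro i x
    rw [hW, mfiW_mul hU0 hUt, mul_comm, ENNReal.ofReal_mul (by have := hvp x; positivity),
      ENNReal.ofReal_prod_of_nonneg (fun j _ => by have := hup j x; positivity)]
    simp only [hU, hY, ← ENNReal.rpow_mul, hrm]
    rw [ENNReal.ofReal_rpow_of_pos (hvp x)]
    congr 1
    exact Finset.prod_congr rfl fun j _ => (ENNReal.ofReal_rpow_of_pos (hup j x)).symm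
  have hlin : ∀ i, ∃ C : ℝ≥0∞, C ≠ ⊤ ∧ ∀ g : ESp n → ℝ≥0∞, AEMeasurable g → ∀ t : ℝ≥0∞, t ≠ 0 → t ≠ ⊤ →
      σ {x | t < W i x ^ (-(1 / r)) * ∫⁻ y, g y * edist x.ofLp y.ofLp ^ (-(n / r))} ≤
          C * ((∫⁻ y, g y * ENNReal.ofReal (u i y)) / t) ^ r := by
    intro i
    obtain ⟨K, hK, hKy⟩ := hkern i
    have := mfi_linear (fun x => ENNReal.ofReal (u i x)) (W i) (hu i).ennreal_ofReal (hWm i) (hu0 i)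
      (fun _ => ENNReal.ofReal_ne_top) (hW0 i) (hWt i) hr1 hK hKy
    rw [hσ, funext (hdens i)]
    exact this
  choose Cc hCct hCc using hlin
  set S : ℝ≥0∞ := ∑ i, Cc i with hS
  have hSt : S ≠ ⊤ := by simp [hS, ENNReal.sum_eq_top, hCct]
  refine ⟨S ^ (1 / q) + 1, ENNReal.add_lt_top.2 ⟨(ENNReal.rpow_ne_top_of_nonneg (by positivity) hSt).lt_top, by simp⟩, ?_⟩
  intro f
  have hzero : (∀ x, multiIα α f x = 0) →
      wnorm (fun x => ENNReal.ofReal |multiIα α f x| / ENNReal.ofReal (v x)) q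
            (fun x => (∏ i, u i x ^ q) * v x ^ q) ≤ (S ^ (1 / q) + 1) * ∏ i, L1norm (f i) (u i) := by
    intro h
    unfold wnorm
    refine iSup₂_le fun t ht => ?_
    simp [h, wMeas, hq0]
  rcases mfi_measurable_or hn hm (α := α) f with h | hf
  · exact hzero h
  have hL1 : ∀ i, L1norm (f i) (u i) = ∫⁻ y, ENNReal.ofReal |f i y| * ENNReal.ofReal (u i y) := by
    intro i
    unfold L1norm
    refine lintegral_congr fun y => ?_
    rw [ENNReal.ofReal_mul (abs_nonneg _)]
  have hfm : ∀ i, AEMeasurable fun y => ENNReal.ofReal |f i y| := fun i => (hf i).norm.ennreal_ofReal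
  by_cases hA0 : ∀ i, L1norm (f i) (u i) ≠ 0
  swap
  · push Not at hA0
    obtain ⟨i, hi⟩ := hA0
    apply hzero
    intro x
    have hpt := mfi_point hm hα f hf x
    rw [hL1] at hi
    replace hi := (lintegral_eq_zero_iff' ((hfm i).mul (hu i).ennreal_ofReal.aemeasurable)).1 hi
    have hz : ∫⁻ y, ENNReal.ofReal |f i y| * edist x.ofLp y.ofLp ^ (-(((m : ℝ) * (n : ℝ) - α) / m)) = 0 := by
      rw [lintegral_congr_ae (g := fun _ => 0), lintegral_zero]
      filter_upwards [hi] with y hy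
      have : ENNReal.ofReal |f i y| = 0 := by
        have hy2 : ENNReal.ofReal |f i y| * ENNReal.ofReal (u i y) = 0 := hy
        rcases mul_eq_zero.1 hy2 with h | h
        · exact h
        · exact absurd h (hu0 i y)
      rw [this, zero_mul]
    rw [Finset.prod_eq_zero (Finset.mem_univ i) hz] at hpt
    simpa using hpt
  by_cases hAt : ∀ i, L1norm (f i) (u i) ≠ ⊤
  swap
  · push Not at hAt
    obtain ⟨i, hi⟩ := hAt
    have : ∏ i, L1norm (f i) (u i) = ⊤ := by
      rw [← Finset.mul_prod_erase _ _ (Finset.mem_univ i), hi, ENNReal.top_mul]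
      exact Finset.prod_ne_zero_iff.2 fun j _ => hA0 j
    rw [this, ENNReal.mul_top (by simp)]
    exact le_top
  set G : Fin m → ESp n → ℝ≥0∞ := fun i x =>
    W i x ^ (-(1 / r)) * ∫⁻ y, ENNReal.ofReal |f i y| * edist x.ofLp y.ofLp ^ (-(n / r)) with hG
  have hlev := mfi_prod_level σ hm hq0 G (fun i => L1norm (f i) (u i)) Cc hA0 hAt (by
    intro i t ht0 htt
    rw [hL1]
    exact hCc i _ (hfm i) t ht0 htt)
  have hpt : ∀ x, ENNReal.ofReal |multiIα α f x| / ENNReal.ofReal (v x) ≤ ∏ i, G i x := by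
    intro x
    have h1 := mfi_point hm hα f hf x
    rw [hexp] at h1
    have h2 : ∏ i, W i x ^ (-(1 / r)) = (ENNReal.ofReal (v x))⁻¹ := by
      simp_rw [ENNReal.rpow_neg]
      rw [← ENNReal.prod_inv_distrib, ENNReal.prod_rpow_of_nonneg (by positivity), hW, mfiW_prod hm hU0 hUt, hY,
        ← ENNReal.rpow_mul, mul_one_div_cancel hr0.ne', ENNReal.rpow_one]
      intro j _ k _ _
      exact Or.inl (mfi_rpow_ne_zero (hW0 j x) (hWt j x) _)
    simp only [hG]
    rw [Finset.prod_mul_distrib, h2, ENNReal.div_eq_inv_mul]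
    exact mul_le_mul_right h1 _
  unfold wnorm
  refine iSup₂_le fun t ht => ?_
  have ht0 : ENNReal.ofReal t ≠ 0 := by simp [ht]
  have htt : ENNReal.ofReal t ≠ ⊤ := ENNReal.ofReal_ne_top
  have hw : wMeas (fun x => (∏ i, u i x ^ q) * v x ^ q)
      {x | ENNReal.ofReal t < ENNReal.ofReal |multiIα α f x| / ENNReal.ofReal (v x)} ≤
      S * ((∏ i, L1norm (f i) (u i)) / ENNReal.ofReal t) ^ q := by
    refine le_trans ?_ (hlev (ENNReal.ofReal t) ht0 htt)
    rw [hσ, withDensity_apply' _ _]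
    unfold wMeas
    exact lintegral_mono_set fun x hx => lt_of_lt_of_le hx (hpt x)
  calc _ ≤ ENNReal.ofReal t * (S * ((∏ i, L1norm (f i) (u i)) / ENNReal.ofReal t) ^ q) ^ (1 / q) :=
        mul_le_mul_right (ENNReal.rpow_le_rpow hw (by positivity)) _
    _ = S ^ (1 / q) * (ENNReal.ofReal t * ((∏ i, L1norm (f i) (u i)) / ENNReal.ofReal t)) := by
        rw [ENNReal.mul_rpow_of_nonneg _ _ (by positivity), ← ENNReal.rpow_mul, mul_one_div_cancel hq0.ne',
          ENNReal.rpow_one]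
        ring
    _ = S ^ (1 / q) * ∏ i, L1norm (f i) (u i) := by rw [ENNReal.mul_div_cancel ht0 htt]
    _ ≤ _ := mul_le_mul_left le_self_add _

lemma mfi_A1_congr {n : ℕ} {w w' : ESp n → ℝ} (h : w =ᵐ[volume] w') (hA : IsA1 w) : IsA1 w' := by
  obtain ⟨C, hC, hA⟩ := hA
  refine ⟨C, hC, fun Q hQ => ?_⟩
  have h1 := hA Q hQ
  have h2 : (fun x => ENNReal.ofReal (w x)) =ᵐ[volume.restrict Q] fun x => ENNReal.ofReal (w' x) :=
    ae_restrict_of_ae (h.mono fun x hx => by simp only [hx])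
  rw [essInf_congr_ae h2, wMeas, lintegral_congr_ae h2] at h1
  exact h1

lemma mfi_Ainf_congr {n : ℕ} {w w' : ESp n → ℝ} (h : w =ᵐ[volume] w') (hA : IsAinfty w) : IsAinfty w' := by
  rcases hA with hA | ⟨p, hp, C, hC, hA⟩
  · exact Or.inl (mfi_A1_congr h hA)
  · refine Or.inr ⟨p, hp, C, hC, fun Q hQ => ?_⟩
    have h1 := hA Q hQ
    have h2 : (fun x => ENNReal.ofReal (w x)) =ᵐ[volume.restrict Q] fun x => ENNReal.ofReal (w' x) :=
      ae_restrict_of_ae (h.mono fun x hx => by simp only [hx])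
    have h3 : (fun x => ENNReal.ofReal (w x) ^ (1 - p / (p - 1))) =ᵐ[volume.restrict Q]
        fun x => ENNReal.ofReal (w' x) ^ (1 - p / (p - 1)) :=
      ae_restrict_of_ae (h.mono fun x hx => by simp only [hx])
    rw [wMeas, lintegral_congr_ae h2, lintegral_congr_ae h3] at h1
    exact h1

lemma mfi_pos_version {n : ℕ} {w : ESp n → ℝ} (h : IsWeight w) :
    ∃ w' : ESp n → ℝ, Measurable w' ∧ (∀ x, 0 < w' x) ∧ w =ᵐ[volume] w' := by
  obtain ⟨hm, hnn, hpos, -⟩ := h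
  refine ⟨fun x => if 0 < w x then w x else 1, ?_, ?_, ?_⟩
  · exact Measurable.ite (measurableSet_lt measurable_const hm) hm measurable_const
  · intro x
    by_cases hx : 0 < w x <;> simp [hx]
  · filter_upwards [hpos] with x hx
    simp [hx]

/-- **Main theorem on `𝓘_α`, second weight condition.**  Let `0 < α < mn`,
`q = n/(mn-α)`, `ν = ∏ uᵢ^q`.  If `u₁^{mq},…,u_m^{mq} ∈ A₁` and `v^{mq} ∈ A_∞`, then
there is `C` such that `‖𝓘_α(f⃗)/v‖_{L^{q,∞}(ν v^q)} ≤ C ∏ ‖fᵢ‖_{L¹(uᵢ)}`. -/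
theorem multilinear_fracIntegral_mixed_second {n m : ℕ} (hn : 0 < n) (hm : 0 < m)
    (α q : ℝ) (hα0 : 0 < α) (hα : α < (m : ℝ) * (n : ℝ))
    (hq : q = (n : ℝ) / ((m : ℝ) * (n : ℝ) - α))
    (u : Fin m → ESp n → ℝ) (v : ESp n → ℝ)
    (hu : ∀ i, IsWeight (u i)) (hv : IsWeight v)
    (hA1 : ∀ i, IsA1 (fun x => u i x ^ ((m : ℝ) * q)))
    (hAinf : IsAinfty (fun x => v x ^ ((m : ℝ) * q))) :
    ∃ C : ℝ≥0∞, C < ⊤ ∧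
      ∀ f : Fin m → ESp n → ℝ,
        wnorm (fun x => ENNReal.ofReal |multiIα α f x| / ENNReal.ofReal (v x)) q
            (fun x => (∏ i, u i x ^ q) * v x ^ q)
          ≤ C * ∏ i, L1norm (f i) (u i) := by
  choose u' hu'm hu'p hu'e using fun i => mfi_pos_version (hu i)
  obtain ⟨v', hv'm, hv'p, hv'e⟩ := mfi_pos_version hv
  obtain ⟨C, hC, hmain⟩ := mfi_main_pos hn hm α q hα0 hα hq u' v' hu'm hv'm hu'p hv'p
    (fun i => mfi_A1_congr ((hu'e i).mono fun x hx => by simp only [hx]) (hA1 i))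
    (mfi_Ainf_congr (hv'e.mono fun x hx => by simp only [hx]) hAinf)
  refine ⟨C, hC, fun f => ?_⟩
  have hue : ∀ᵐ x : ESp n, ∀ i, u i x = u' i x := ae_all_iff.2 hu'e
  have hL : ∀ i, L1norm (f i) (u i) = L1norm (f i) (u' i) := fun i =>
    lintegral_congr_ae ((hu'e i).mono fun x hx => by simp only [hx])
  simp_rw [hL]
  refine le_trans ?_ (hmain f)
  unfold wnorm
  refine iSup₂_mono fun t ht => ?_
  refine mul_le_mul_right (ENNReal.rpow_le_rpow ?_ ?_) _
  · unfold wMeas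
    calc _ ≤ ∫⁻ x in {x | ENNReal.ofReal t < ENNReal.ofReal |multiIα α f x| / ENNReal.ofReal (v' x)},
          ENNReal.ofReal ((∏ i, u i x ^ q) * v x ^ q) := by
          refine lintegral_mono_set' ?_
          filter_upwards [hv'e] with x hx
          intro hmem
          change ENNReal.ofReal t < _ at hmem
          rw [hx] at hmem
          exact hmem
      _ = _ := by
          refine lintegral_congr_ae (ae_restrict_of_ae ?_)
          filter_upwards [hue, hv'e] with x hx hx'
          simp only [hx, hx']
  · rw [hq]
    have : 0 < (m : ℝ) * (n : ℝ) - α := by linarith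
    positivity

end
end

section
/- (Characterization of multilinear A_{\vec P} classes) Let 1≤p_1,…,p_m<∞, define p by 1/p = 1/p_1+⋯+1/p_m, and let w⃗=(w_1,…,w_m) be weights on ℝ^n. Then w⃗ ∈ A_{\vec P} if and only if: (i) for each i with p_i>1, w_i^{1−p_i'} ∈ A_{m p_i'}, and for each i with p_i=1, w_i^{1/m} ∈ A_1; and (ii) ν_{w⃗} = ∏_{i=1}^m w_i^{p/p_i} ∈ A_{mp}. -/
open MeasureTheory ENNReal Set

noncomputable section

/-- The multilinear Muckenhoupt class `A_{\vec P}` for `P⃗ = (p₁,…,p_m)`, where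
`1/p = ∑ 1/pᵢ`, and for `pᵢ = 1` the corresponding factor is `(ess inf_Q wᵢ)⁻¹`. -/
def AvecP {n m : ℕ} (p : Fin m → ℝ) (w : Fin m → ESp n → ℝ) : Prop :=
  ∃ C : ℝ≥0∞, C < ⊤ ∧ ∀ Q : Set (ESp n), IsCube Q →
    ((volume Q)⁻¹ *
        ∫⁻ x in Q, ENNReal.ofReal (∏ i, w i x ^ ((∑ j, (p j)⁻¹)⁻¹ / p i))) ^ (∑ j, (p j)⁻¹) *
      ∏ i, (if p i = 1 then
              (essInf (fun x => ENNReal.ofReal (w i x)) (volume.restrict Q))⁻¹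
            else
              ((volume Q)⁻¹ *
                  ∫⁻ x in Q, ENNReal.ofReal (w i x) ^ (1 - p i / (p i - 1))) ^ (1 - (p i)⁻¹))
      ≤ C

/-- The class `A_r` for `1 ≤ r < ∞`: `A₁` when `r = 1`, the usual `A_r` when `r > 1`. -/
def IsApGen {n : ℕ} (w : ESp n → ℝ) (r : ℝ) : Prop :=
  if r = 1 then IsA1 w else IsAp w r

/-- The (quasi)norm of `L^{1/t}(μ)`, with `t = 0` the essential supremum. -/
def Nn {X : Type*} [MeasurableSpace X] (μ : Measure X) (f : X → ℝ≥0∞) (t : ℝ) : ℝ≥0∞ :=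
  if t = 0 then essSup f μ else (∫⁻ x, f x ^ (t⁻¹) ∂μ) ^ t

lemma Nn_congr {X : Type*} [MeasurableSpace X] {μ : Measure X} {f g : X → ℝ≥0∞}
    (h : f =ᵐ[μ] g) (t : ℝ) : Nn μ f t = Nn μ g t := by
  unfold Nn
  split_ifs
  · exact essSup_congr_ae h
  · congr 1
    apply lintegral_congr_ae
    filter_upwards [h] with x hx
    rw [hx]

lemma Nn_mul_le_zero {X : Type*} [MeasurableSpace X] {μ : Measure X} {f g : X → ℝ≥0∞}
    (hg : AEMeasurable g μ) {b : ℝ} (hb : 0 ≤ b) :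
    Nn μ (fun x => f x * g x) b ≤ Nn μ f 0 * Nn μ g b := by
  unfold Nn
  rw [if_pos rfl]
  split_ifs with h
  · exact ENNReal.essSup_mul_le f g
  · have hb' : 0 < b := lt_of_le_of_ne hb (Ne.symm h)
    have : ∫⁻ x, (f x * g x) ^ b⁻¹ ∂μ ≤ (essSup f μ) ^ b⁻¹ * ∫⁻ x, g x ^ b⁻¹ ∂μ := by
      rw [← lintegral_const_mul'' _ (hg.pow_const _)]
      apply lintegral_mono_ae
      filter_upwards [ENNReal.ae_le_essSup f] with x hx
      rw [← ENNReal.mul_rpow_of_nonneg _ _ (by positivity)]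
      gcongr
    calc _ ≤ ((essSup f μ) ^ b⁻¹ * ∫⁻ x, g x ^ b⁻¹ ∂μ) ^ b := by gcongr
      _ = _ := by
        rw [ENNReal.mul_rpow_of_nonneg _ _ hb, ← ENNReal.rpow_mul, inv_mul_cancel₀ h,
          ENNReal.rpow_one]

lemma Nn_mul_le {X : Type*} [MeasurableSpace X] {μ : Measure X} {f g : X → ℝ≥0∞}
    (hf : AEMeasurable f μ) (hg : AEMeasurable g μ) {a b : ℝ} (ha : 0 ≤ a) (hb : 0 ≤ b) :
    Nn μ (fun x => f x * g x) (a + b) ≤ Nn μ f a * Nn μ g b := by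
  rcases ha.eq_or_lt with rfl | ha'
  · rw [zero_add]; exact Nn_mul_le_zero hg hb
  rcases hb.eq_or_lt with rfl | hb'
  · rw [add_zero, mul_comm]
    simp_rw [mul_comm (f _)]
    exact Nn_mul_le_zero hf ha
  unfold Nn
  rw [if_neg (by positivity), if_neg ha'.ne', if_neg hb'.ne']
  have key := ENNReal.lintegral_mul_norm_pow_le (μ := μ) (hf.pow_const a⁻¹) (hg.pow_const b⁻¹)
    (p := a / (a + b)) (q := b / (a + b)) (by positivity) (by positivity) (by field_simp)
  have e : ∀ x, (f x * g x) ^ (a + b)⁻¹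
      = (f x ^ a⁻¹) ^ (a / (a + b)) * (g x ^ b⁻¹) ^ (b / (a + b)) := by
    intro x
    rw [ENNReal.mul_rpow_of_nonneg _ _ (by positivity), ← ENNReal.rpow_mul, ← ENNReal.rpow_mul]
    congr 2 <;> field_simp
  simp_rw [e]
  calc _ ≤ _ := ENNReal.rpow_le_rpow key (by positivity)
    _ = _ := by
      rw [ENNReal.mul_rpow_of_nonneg _ _ (by positivity), ← ENNReal.rpow_mul, ← ENNReal.rpow_mul]
      congr 2 <;> field_simp

lemma Nn_one {X : Type*} [MeasurableSpace X] {μ : Measure X} [IsProbabilityMeasure μ] (t : ℝ) :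
    Nn μ (fun _ => 1) t = 1 := by
  unfold Nn
  split_ifs
  · exact essSup_const _ (IsProbabilityMeasure.ne_zero μ)
  · simp

lemma Nn_prod_le {X ι : Type*} [MeasurableSpace X] {μ : Measure X} [IsProbabilityMeasure μ]
    (S : Finset ι) (f : ι → X → ℝ≥0∞) (hf : ∀ i, Measurable (f i)) (t : ι → ℝ)
    (ht : ∀ i, 0 ≤ t i) :
    Nn μ (fun x => ∏ i ∈ S, f i x) (∑ i ∈ S, t i) ≤ ∏ i ∈ S, Nn μ (f i) (t i) := by
  classical
  induction S using Finset.induction_on with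
  | empty => simp [Nn_one]
  | insert a S ha ih =>
    simp_rw [Finset.prod_insert ha]
    rw [Finset.sum_insert ha]
    refine (Nn_mul_le (hf a).aemeasurable
      (Finset.measurable_fun_prod S fun i _ => hf i).aemeasurable (ht a)
      (Finset.sum_nonneg fun i _ => ht i)).trans ?_
    gcongr

lemma Nn_rpow {X : Type*} [MeasurableSpace X] {μ : Measure X} (f : X → ℝ≥0∞) {c : ℝ}
    (hc : 0 < c) (t : ℝ) : Nn μ (fun x => f x ^ c) t = Nn μ f (t / c) ^ c := by
  unfold Nn
  by_cases h : t = 0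
  · subst h
    simp only [zero_div, if_true]
    exact ((ENNReal.orderIsoRpow c hc).essSup_apply f μ).symm
  · rw [if_neg h, if_neg (by positivity), ← ENNReal.rpow_mul]
    congr 1
    · apply lintegral_congr
      intro x
      rw [← ENNReal.rpow_mul]; congr 1; field_simp
    · field_simp

lemma essSup_inv' {X : Type*} [MeasurableSpace X] {μ : Measure X} (f : X → ℝ≥0∞) :
    essSup (fun x => (f x)⁻¹) μ = (essInf f μ)⁻¹ := by
  exact (ENNReal.inv_liminf).symm

/-- normalized measure on a cube -/
def muQ {n : ℕ} (Q : Set (ESp n)) : Measure (ESp n) := (volume Q)⁻¹ • volume.restrict Q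

lemma cube_vol {n : ℕ} {Q : Set (ESp n)} (hQ : IsCube Q) : volume Q ≠ 0 ∧ volume Q ≠ ⊤ := by
  obtain ⟨c, h, hh, rfl⟩ := hQ
  have e : {x : ESp n | ∀ i, c i ≤ x i ∧ x i ≤ c i + h}
      = (MeasurableEquiv.toLp 2 (Fin n → ℝ)).symm ⁻¹' (Set.Icc c (fun i => c i + h)) := by
    ext x
    simp only [Set.mem_ofPred_eq, Set.mem_preimage, Set.mem_Icc, Pi.le_def]
    exact forall_and
  rw [e, (EuclideanSpace.volume_preserving_symm_measurableEquiv_toLp (Fin n)).measure_preimage_equiv,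
    Real.volume_Icc_pi]
  simp [hh]

lemma muQ_prob {n : ℕ} {Q : Set (ESp n)} (hQ : IsCube Q) : IsProbabilityMeasure (muQ Q) := by
  constructor
  simp [muQ, ENNReal.inv_mul_cancel (cube_vol hQ).1 (cube_vol hQ).2]

lemma muQ_ae {n : ℕ} {Q : Set (ESp n)} {P : ESp n → Prop} (h : ∀ᵐ x, P x) :
    ∀ᵐ x ∂(muQ Q), P x :=
  Measure.ae_smul_measure (ae_restrict_of_ae h) _

lemma muQ_int {n : ℕ} (Q : Set (ESp n)) (f : ESp n → ℝ≥0∞) :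
    (volume Q)⁻¹ * ∫⁻ x in Q, f x = ∫⁻ x, f x ∂(muQ Q) := by
  simp [muQ, lintegral_smul_measure]

lemma muQ_essInf {n : ℕ} {Q : Set (ESp n)} (hQ : IsCube Q) (f : ESp n → ℝ≥0∞) :
    (essInf f (volume.restrict Q))⁻¹ = Nn (muQ Q) (fun x => (f x)⁻¹) 0 := by
  unfold Nn
  rw [if_pos rfl, essSup_inv']
  unfold essInf muQ
  rw [Measure.ae_ennreal_smul_measure_eq (by simp [(cube_vol hQ).2])]

lemma isApGen_iff {n : ℕ} (v : ESp n → ℝ) {r : ℝ} (hr : 1 ≤ r) :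
    IsApGen v r ↔ ∃ C : ℝ≥0∞, C < ⊤ ∧ ∀ Q : Set (ESp n), IsCube Q →
      Nn (muQ Q) (fun x => ENNReal.ofReal (v x)) 1 *
        Nn (muQ Q) (fun x => (ENNReal.ofReal (v x))⁻¹) (r - 1) ≤ C := by
  have h1 : ∀ Q, Nn (muQ Q) (fun x => ENNReal.ofReal (v x)) 1 = (volume Q)⁻¹ * wMeas v Q := by
    intro Q
    simp [Nn, wMeas, muQ_int]
  unfold IsApGen
  split_ifs with h
  · subst h
    rw [sub_self]
    constructor
    · rintro ⟨C, hC, H⟩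
      refine ⟨C, hC, fun Q hQ => ?_⟩
      rw [h1, ← muQ_essInf hQ]
      exact ENNReal.div_le_of_le_mul (H Q hQ)
    · rintro ⟨C, hC, H⟩
      refine ⟨max C 1, max_lt hC ENNReal.one_lt_top, fun Q hQ => ?_⟩
      have := H Q hQ
      rw [h1, ← muQ_essInf hQ] at this
      refine (ENNReal.div_le_iff_le_mul (Or.inr (max_lt hC ENNReal.one_lt_top).ne)
        (Or.inr (by simp))).1 ?_
      exact this.trans (le_max_left _ _)
  · have hr' : 1 < r := lt_of_le_of_ne hr (Ne.symm h)
    unfold IsAp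
    refine exists_congr fun C => and_congr_right fun _ => forall_congr' fun Q =>
      forall_congr' fun hQ => ?_
    rw [h1, muQ_int]
    have : Nn (muQ Q) (fun x => (ENNReal.ofReal (v x))⁻¹) (r - 1)
      = (∫⁻ x, ENNReal.ofReal (v x) ^ (1 - r / (r - 1)) ∂(muQ Q)) ^ (r - 1) := by
      unfold Nn
      rw [if_neg (by linarith)]
      congr 1
      apply lintegral_congr
      intro x
      rw [ENNReal.inv_rpow, ← ENNReal.rpow_neg]
      congr 1
      have : r - 1 ≠ 0 := by linarith
      field_simp; ring
    rw [this]

lemma isApGen_iff' {n : ℕ} (v : ESp n → ℝ) {r : ℝ} (hr : 1 ≤ r) (U U' : ESp n → ℝ≥0∞) {e a b : ℝ}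
    (he : 0 < e) (hU : ∀ᵐ x, ENNReal.ofReal (v x) = U x ^ e) (hU' : ∀ᵐ x, (U x)⁻¹ = U' x)
    (ha : 1 / e = a) (hb : (r - 1) / e = b) :
    IsApGen v r ↔ ∃ C : ℝ≥0∞, C < ⊤ ∧ ∀ Q : Set (ESp n), IsCube Q →
      Nn (muQ Q) U a * Nn (muQ Q) U' b ≤ C := by
  subst ha hb
  rw [isApGen_iff v hr]
  have key : ∀ Q : Set (ESp n), Nn (muQ Q) (fun x => ENNReal.ofReal (v x)) 1 *
        Nn (muQ Q) (fun x => (ENNReal.ofReal (v x))⁻¹) (r - 1)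
      = (Nn (muQ Q) U (1 / e) * Nn (muQ Q) U' ((r - 1) / e)) ^ e := by
    intro Q
    rw [ENNReal.mul_rpow_of_nonneg _ _ he.le, ← Nn_rpow _ he, ← Nn_rpow _ he]
    congr 1
    · exact Nn_congr (muQ_ae hU) _
    · apply Nn_congr
      filter_upwards [muQ_ae (Q := Q) hU, muQ_ae (Q := Q) hU'] with x h1 h2
      rw [h1, ← h2, ENNReal.inv_rpow]
  simp_rw [key]
  constructor
  · rintro ⟨C, hC, H⟩
    refine ⟨C ^ e⁻¹, ENNReal.rpow_lt_top_of_nonneg (by positivity) hC.ne, fun Q hQ => ?_⟩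
    exact (ENNReal.le_rpow_inv_iff he).2 (H Q hQ)
  · rintro ⟨C, hC, H⟩
    refine ⟨C ^ e, ENNReal.rpow_lt_top_of_nonneg he.le hC.ne, fun Q hQ => ?_⟩
    exact ENNReal.rpow_le_rpow (H Q hQ) he.le

lemma core {n m : ℕ} (t : Fin m → ℝ) (ht0 : ∀ i, 0 ≤ t i) (ht1 : ∀ i, t i < 1)
    (s : ℝ) (hs : s = ∑ i, (1 - t i)) (u : Fin m → ESp n → ℝ≥0∞)
    (hu : ∀ i, Measurable (u i)) (hu0 : ∀ i, ∀ᵐ x, u i x ≠ 0 ∧ u i x ≠ ⊤) :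
    (∃ C : ℝ≥0∞, C < ⊤ ∧ ∀ Q : Set (ESp n), IsCube Q →
      Nn (muQ Q) (fun x => ∏ i, u i x) s * ∏ i, Nn (muQ Q) (fun x => (u i x)⁻¹) (t i) ≤ C) ↔
    ((∀ i, ∃ C : ℝ≥0∞, C < ⊤ ∧ ∀ Q : Set (ESp n), IsCube Q →
      Nn (muQ Q) (fun x => (u i x)⁻¹) (t i) * Nn (muQ Q) (u i) (m - t i) ≤ C) ∧
     ∃ C : ℝ≥0∞, C < ⊤ ∧ ∀ Q : Set (ESp n), IsCube Q →
      Nn (muQ Q) (fun x => ∏ i, u i x) s * Nn (muQ Q) (fun x => ∏ i, (u i x)⁻¹) (m - s) ≤ C) := by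
  have hs0 : 0 ≤ s := by
    rw [hs]; exact Finset.sum_nonneg fun i _ => by linarith [ht1 i]
  have hms : ∑ i, t i = m - s := by
    rw [hs, Finset.sum_sub_distrib]; simp
  have hall : ∀ᵐ x, ∀ i, u i x ≠ 0 ∧ u i x ≠ ⊤ := ae_all_iff.2 hu0
  have hpm : Measurable (fun x => ∏ i, u i x) := Finset.measurable_fun_prod _ fun i _ => hu i
  have him : ∀ i, Measurable (fun x => (u i x)⁻¹) := fun i => (hu i).inv
  constructor
  · rintro ⟨C, hC, H⟩
    refine ⟨fun i => ⟨C, hC, fun Q hQ => ?_⟩, C, hC, fun Q hQ => ?_⟩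
    · have := muQ_prob hQ
      have e1 : u i =ᵐ[muQ Q] fun x => (∏ j, u j x) * ∏ j ∈ Finset.univ.erase i, (u j x)⁻¹ := by
        filter_upwards [muQ_ae (Q := Q) hall] with x hx
        rw [← Finset.mul_prod_erase _ _ (Finset.mem_univ i), mul_assoc, ← Finset.prod_mul_distrib,
          Finset.prod_eq_one, mul_one]
        intro j _
        exact ENNReal.mul_inv_cancel (hx j).1 (hx j).2
      have e2 : (m : ℝ) - t i = s + ∑ j ∈ Finset.univ.erase i, t j := by
        have := Finset.add_sum_erase Finset.univ t (Finset.mem_univ i)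
        linarith
      have h3 : Nn (muQ Q) (u i) (m - t i) ≤ Nn (muQ Q) (fun x => ∏ i, u i x) s *
          ∏ j ∈ Finset.univ.erase i, Nn (muQ Q) (fun x => (u j x)⁻¹) (t j) := by
        rw [Nn_congr e1, e2]
        refine (Nn_mul_le hpm.aemeasurable
          (Finset.measurable_fun_prod _ fun i _ => him i).aemeasurable hs0
          (Finset.sum_nonneg fun i _ => ht0 i)).trans ?_
        gcongr
        exact Nn_prod_le _ _ him t ht0
      refine le_trans ?_ (H Q hQ)
      rw [← Finset.mul_prod_erase _ _ (Finset.mem_univ i), mul_left_comm]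
      gcongr
    · have := muQ_prob hQ
      refine le_trans ?_ (H Q hQ)
      rw [← hms]
      gcongr
      exact Nn_prod_le _ _ him t ht0
  · rintro ⟨H1, C, hC, H⟩
    choose D hD H1 using H1
    refine ⟨(∏ i, D i) * C, ENNReal.mul_lt_top (ENNReal.prod_lt_top fun i _ => hD i) hC,
      fun Q hQ => ?_⟩
    have := muQ_prob hQ
    have hb : 1 ≤ (∏ i, Nn (muQ Q) (u i) (m - t i)) *
        Nn (muQ Q) (fun x => ∏ i, (u i x)⁻¹) (m - s) := by
      have ht' : ∀ i, 0 ≤ (m : ℝ) - t i := by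
        intro i
        have : (1 : ℝ) ≤ m := by exact_mod_cast i.pos
        linarith [ht1 i]
      have e1 : (fun _ => 1) =ᵐ[muQ Q] fun x => (∏ j, u j x) * ∏ j, (u j x)⁻¹ := by
        filter_upwards [muQ_ae (Q := Q) hall] with x hx
        rw [← Finset.prod_mul_distrib, Finset.prod_eq_one]
        intro j _
        exact ENNReal.mul_inv_cancel (hx j).1 (hx j).2
      rw [← Nn_one (μ := muQ Q) (∑ i, ((m : ℝ) - t i) + (m - s)), Nn_congr e1]
      refine (Nn_mul_le hpm.aemeasurable
          (Finset.measurable_fun_prod _ fun i _ => him i).aemeasurable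
          (Finset.sum_nonneg fun i _ => ht' i)
          (hms ▸ Finset.sum_nonneg fun i _ => ht0 i)).trans ?_
      gcongr
      exact Nn_prod_le _ _ hu _ ht'
    calc _ ≤ (Nn (muQ Q) (fun x => ∏ i, u i x) s *
            ∏ i, Nn (muQ Q) (fun x => (u i x)⁻¹) (t i)) * _ := le_mul_of_one_le_right' hb
      _ = (∏ i, Nn (muQ Q) (fun x => (u i x)⁻¹) (t i) * Nn (muQ Q) (u i) (m - t i)) *
          (Nn (muQ Q) (fun x => ∏ i, u i x) s *
            Nn (muQ Q) (fun x => ∏ i, (u i x)⁻¹) (m - s)) := by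
        rw [Finset.prod_mul_distrib]; ring
      _ ≤ _ := mul_le_mul' (Finset.prod_le_prod' fun i _ => H1 i Q hQ) (H Q hQ)

/-- **Characterization of the multilinear `A_{\vec P}` classes (Lerner et al.).**
`w⃗ ∈ A_{\vec P}` iff (i) for each `i` with `pᵢ > 1`, `wᵢ^{1-pᵢ'} ∈ A_{mpᵢ'}` and for each
`i` with `pᵢ = 1`, `wᵢ^{1/m} ∈ A₁`; and (ii) `ν_{w⃗} = ∏ wᵢ^{p/pᵢ} ∈ A_{mp}`. -/
theorem AvecP_characterization {n m : ℕ} (hn : 0 < n) (hm : 0 < m)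
    (p : Fin m → ℝ) (hp : ∀ i, 1 ≤ p i)
    (w : Fin m → ESp n → ℝ) (hw : ∀ i, IsWeight (w i)) :
    AvecP p w ↔
      ((∀ i, (1 < p i →
            IsAp (fun x => w i x ^ (1 - p i / (p i - 1))) ((m : ℝ) * (p i / (p i - 1)))) ∧
          (p i = 1 → IsA1 (fun x => w i x ^ ((m : ℝ)⁻¹)))) ∧
        IsApGen (fun x => ∏ i, w i x ^ ((∑ j, (p j)⁻¹)⁻¹ / p i))
          ((m : ℝ) * (∑ j, (p j)⁻¹)⁻¹)) := by
  set s : ℝ := ∑ j, (p j)⁻¹ with hs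
  have hp0 : ∀ i, 0 < p i := fun i => lt_of_lt_of_le one_pos (hp i)
  have hm1 : (1 : ℝ) ≤ m := by exact_mod_cast hm
  have hs0 : 0 < s := Finset.sum_pos (fun i _ => inv_pos.2 (hp0 i)) ⟨⟨0, hm⟩, Finset.mem_univ _⟩
  have hsm : s ≤ m := by
    calc s ≤ ∑ _j : Fin m, (1 : ℝ) := Finset.sum_le_sum fun i _ => inv_le_one_of_one_le₀ (hp i)
      _ = m := by simp
  let u : Fin m → ESp n → ℝ≥0∞ := fun i x => ENNReal.ofReal (w i x) ^ (p i)⁻¹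
  have hu : ∀ i, Measurable (u i) := fun i => ((hw i).1.ennreal_ofReal).pow_const _
  have hpos : ∀ᵐ x, ∀ i, 0 < w i x := ae_all_iff.2 fun i => (hw i).2.2.1
  have hu0 : ∀ i, ∀ᵐ x, u i x ≠ 0 ∧ u i x ≠ ⊤ := by
    intro i
    filter_upwards [hpos] with x hx
    have h1 : ENNReal.ofReal (w i x) ≠ 0 := by simpa using hx i
    exact ⟨(ENNReal.rpow_pos (pos_iff_ne_zero.2 h1) ENNReal.ofReal_ne_top).ne',
      ENNReal.rpow_ne_top_of_nonneg (inv_nonneg.2 (hp0 i).le) ENNReal.ofReal_ne_top⟩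
  have hall : ∀ᵐ x, ∀ i, u i x ≠ 0 ∧ u i x ≠ ⊤ := ae_all_iff.2 hu0
  have hν : ∀ᵐ x, ENNReal.ofReal (∏ i, w i x ^ (s⁻¹ / p i)) = (∏ i, u i x) ^ s⁻¹ := by
    filter_upwards [hpos] with x hx
    rw [ENNReal.ofReal_prod_of_nonneg fun i _ => Real.rpow_nonneg (hx i).le _,
      ← ENNReal.prod_rpow_of_nonneg (inv_nonneg.2 hs0.le)]
    refine Finset.prod_congr rfl fun i _ => ?_
    rw [← ENNReal.ofReal_rpow_of_pos (hx i), ← ENNReal.rpow_mul]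
    congr 1
    rw [div_eq_mul_inv, mul_comm]
  have hcore := core (fun i => 1 - (p i)⁻¹) (fun i => sub_nonneg.2 (inv_le_one_of_one_le₀ (hp i)))
    (fun i => by linarith [inv_pos.2 (hp0 i)]) s (by simp [hs]) u hu hu0
  have hL : AvecP p w ↔ (∃ C : ℝ≥0∞, C < ⊤ ∧ ∀ Q : Set (ESp n), IsCube Q →
      Nn (muQ Q) (fun x => ∏ i, u i x) s *
        ∏ i, Nn (muQ Q) (fun x => (u i x)⁻¹) (1 - (p i)⁻¹) ≤ C) := by
    unfold AvecP
    refine exists_congr fun C => and_congr_right fun _ => forall_congr' fun Q =>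
      forall_congr' fun hQ => ?_
    refine Eq.to_iff (congrArg (· ≤ C) ?_)
    congr 1
    · rw [muQ_int]
      unfold Nn
      rw [if_neg hs0.ne', lintegral_congr_ae (muQ_ae hν)]
    · refine Finset.prod_congr rfl fun i _ => ?_
      split_ifs with h
      · rw [muQ_essInf hQ]
        simp [u, h]
      · have h1 : 1 < p i := lt_of_le_of_ne (hp i) (Ne.symm h)
        have h2 : p i - 1 ≠ 0 := by linarith
        have h3 := hp0 i
        have h4 : 1 - (p i)⁻¹ ≠ 0 := by
          have := inv_lt_one_of_one_lt₀ h1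
          linarith
        rw [muQ_int]
        unfold Nn
        rw [if_neg h4]
        congr 1
        apply lintegral_congr
        intro x
        simp only [u]
        rw [← ENNReal.rpow_neg, ← ENNReal.rpow_mul]
        congr 1
        have h5 : 1 - (p i)⁻¹ = (p i - 1) / p i := by field_simp
        rw [h5]
        field_simp; ring
  rw [hL, hcore]
  refine and_congr (forall_congr' fun i => ?_) ?_
  · have h3 := hp0 i
    rcases (hp i).eq_or_lt with h | h
    · have hA : IsA1 (fun x => w i x ^ ((m : ℝ)⁻¹)) ↔ IsApGen (fun x => w i x ^ ((m : ℝ)⁻¹)) 1 := by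
        simp [IsApGen]
      have hB := isApGen_iff' (fun x => w i x ^ ((m : ℝ)⁻¹)) le_rfl (u i) (fun x => (u i x)⁻¹)
        (e := (m : ℝ)⁻¹) (a := m - (1 - (p i)⁻¹)) (b := 1 - (p i)⁻¹) (by positivity)
        (by
          filter_upwards [hpos] with x hx
          rw [← ENNReal.ofReal_rpow_of_pos (hx i)]
          simp [u, ← h])
        (by simp) (by simp [← h]) (by simp [← h])
      have hC : (1 < p i → IsAp (fun x => w i x ^ (1 - p i / (p i - 1)))
          ((m : ℝ) * (p i / (p i - 1)))) ↔ True := by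
        simp [← h]
      rw [hC, true_and, hA, hB]
      simp only [mul_comm, h.symm, true_imp_iff]
    · have h2 : 0 < p i - 1 := by linarith
      have hr : 1 < (m : ℝ) * (p i / (p i - 1)) := by
        have : 1 < p i / (p i - 1) := by rw [one_lt_div h2]; linarith
        nlinarith
      have hA : IsAp (fun x => w i x ^ (1 - p i / (p i - 1))) ((m : ℝ) * (p i / (p i - 1))) ↔
          IsApGen (fun x => w i x ^ (1 - p i / (p i - 1))) ((m : ℝ) * (p i / (p i - 1))) := by
        rw [IsApGen, if_neg hr.ne']
      have hB := isApGen_iff' (fun x => w i x ^ (1 - p i / (p i - 1))) hr.le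
        (fun x => (u i x)⁻¹) (u i)
        (e := p i / (p i - 1)) (a := 1 - (p i)⁻¹) (b := m - (1 - (p i)⁻¹)) (by positivity)
        (by
          filter_upwards [hpos] with x hx
          rw [← ENNReal.ofReal_rpow_of_pos (hx i)]
          simp only [u]
          rw [← ENNReal.rpow_neg, ← ENNReal.rpow_mul]
          congr 1
          field_simp; ring)
        (by simp) (by field_simp) (by field_simp)
      have hC : (p i = 1 → IsA1 (fun x => w i x ^ ((m : ℝ)⁻¹))) ↔ True := by
        simp [h.ne']
      rw [hC, and_true, hA, hB]
      simp only [h, true_imp_iff]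
  · have hr : 1 ≤ (m : ℝ) * s⁻¹ := by
      rw [← div_eq_mul_inv, one_le_div hs0]; exact hsm
    rw [isApGen_iff' _ hr (fun x => ∏ i, u i x) (fun x => ∏ i, (u i x)⁻¹)
        (e := s⁻¹) (a := s) (b := m - s) (by positivity) hν ?_ (by simp) (by field_simp)]
    filter_upwards [hall] with x hx
    exact ENNReal.prod_inv_distrib fun i _ j _ _ => Or.inl (hx i).1

end
end

section
/- (Consequences of membership in A_{(1,…,1)}) Let w⃗=(w_1,…,w_m) be weights on ℝ^n with w⃗ ∈ A_{(1,…,1)}. Then ν_{w⃗} = w_1^{1/m}⋯w_m^{1/m} ∈ A_1, and w_i^{1/m} ∈ A_1 for every i=1,…,m. -/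
open MeasureTheory ENNReal Set

noncomputable section

lemma key {n m : ℕ} (hm : 0 < m)
    (w : Fin m → ESp n → ℝ) (hw : ∀ i, IsWeight (w i)) (C : ℝ≥0∞) (hC : C < ⊤)
    (Q : Set (ESp n)) (hQ : IsCube Q)
    (h : ((volume Q)⁻¹ * ∫⁻ x in Q, ENNReal.ofReal (∏ i, w i x ^ ((m : ℝ)⁻¹))) ^ (m : ℝ) *
      ∏ i, (essInf (fun x => ENNReal.ofReal (w i x)) (volume.restrict Q))⁻¹ ≤ C) :
    (∀ i, essInf (fun x => ENNReal.ofReal (w i x)) (volume.restrict Q) ≠ 0 ∧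
      essInf (fun x => ENNReal.ofReal (w i x)) (volume.restrict Q) ≠ ⊤) ∧
    (volume Q)⁻¹ * ∫⁻ x in Q, ENNReal.ofReal (∏ i, w i x ^ ((m : ℝ)⁻¹)) ≤
      C ^ ((m : ℝ)⁻¹) *
        ∏ i, essInf (fun x => ENNReal.ofReal (w i x)) (volume.restrict Q) ^ ((m : ℝ)⁻¹) := by
  obtain ⟨hv0, hvt⟩ := cube_vol hQ
  have hm' : (0 : ℝ) < m := by exact_mod_cast hm
  set e : Fin m → ℝ≥0∞ := fun i => essInf (fun x => ENNReal.ofReal (w i x)) (volume.restrict Q)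
    with he
  have hne : (volume.restrict Q) ≠ 0 := by
    rw [Ne, Measure.restrict_eq_zero]; exact hv0
  haveI : (ae (volume.restrict Q)).NeBot := ae_neBot.2 hne
  have het : ∀ i, e i ≠ ⊤ := by
    intro i hi
    have h1 : ∀ᵐ x ∂(volume.restrict Q), e i ≤ ENNReal.ofReal (w i x) := ae_essInf_le
    obtain ⟨x, hx⟩ := h1.exists
    rw [hi] at hx
    exact ENNReal.ofReal_ne_top (top_le_iff.1 hx)
  set A := (volume Q)⁻¹ * ∫⁻ x in Q, ENNReal.ofReal (∏ i, w i x ^ ((m : ℝ)⁻¹)) with hA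
  have hA0 : A ≠ 0 := by
    refine mul_ne_zero (ENNReal.inv_ne_zero.2 hvt) ?_
    have hmeas : Measurable fun x => ENNReal.ofReal (∏ i, w i x ^ ((m : ℝ)⁻¹)) :=
      (Finset.measurable_prod _ fun i _ => (hw i).1.pow_const _).ennreal_ofReal
    rw [Ne, lintegral_eq_zero_iff hmeas]
    intro h0
    have hp : ∀ᵐ x ∂(volume.restrict Q), ∀ i, 0 < w i x :=
      ae_all_iff.2 fun i => ae_restrict_of_ae (hw i).2.2.1
    obtain ⟨x, hx, hx'⟩ := (h0.and hp).exists
    have : 0 < ∏ i, w i x ^ ((m : ℝ)⁻¹) :=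
      Finset.prod_pos fun i _ => Real.rpow_pos_of_pos (hx' i) _
    simp only [Pi.zero_apply, ENNReal.ofReal_eq_zero] at hx
    linarith
  have hAm : A ^ (m : ℝ) ≠ 0 := by
    simp [ENNReal.rpow_eq_zero_iff, hA0, hm'.le]
  have he0 : ∀ i, e i ≠ 0 := by
    intro i hi
    have : ∏ i, (e i)⁻¹ = ⊤ := by
      rw [← Finset.mul_prod_erase _ _ (Finset.mem_univ i), hi, ENNReal.inv_zero]
      refine ENNReal.top_mul ?_
      rw [Finset.prod_ne_zero_iff]
      intro j _
      exact ENNReal.inv_ne_zero.2 (het j)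
    change A ^ (m : ℝ) * ∏ i, (e i)⁻¹ ≤ C at h
    rw [this, ENNReal.mul_top hAm] at h
    exact absurd hC (not_lt.2 h)
  refine ⟨fun i => ⟨he0 i, het i⟩, ?_⟩
  change A ^ (m : ℝ) * ∏ i, (e i)⁻¹ ≤ C at h
  change A ≤ C ^ ((m : ℝ)⁻¹) * ∏ i, (e i) ^ ((m : ℝ)⁻¹)
  have h2 : A ^ (m : ℝ) ≤ C * ∏ i, e i := by
    calc A ^ (m : ℝ) = A ^ (m : ℝ) * ((∏ i, (e i)⁻¹) * ∏ i, e i) := by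
          rw [← Finset.prod_mul_distrib]
          simp [ENNReal.inv_mul_cancel (he0 _) (het _)]
      _ ≤ C * ∏ i, e i := by rw [← mul_assoc]; gcongr
  rw [ENNReal.prod_rpow_of_nonneg (by positivity),
    ← ENNReal.mul_rpow_of_nonneg _ _ (by positivity)]
  exact (ENNReal.le_rpow_inv_iff hm').2 h2

lemma ofReal_prod_eq {n m : ℕ} (w : Fin m → ESp n → ℝ) (hw : ∀ i, IsWeight (w i)) (x : ESp n) :
    ENNReal.ofReal (∏ i, w i x ^ ((m : ℝ)⁻¹)) = ∏ i, ENNReal.ofReal (w i x) ^ ((m : ℝ)⁻¹) := by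
  rw [ENNReal.ofReal_prod_of_nonneg fun i _ => Real.rpow_nonneg ((hw i).2.1 x) _]
  exact Finset.prod_congr rfl fun i _ =>
    (ENNReal.ofReal_rpow_of_nonneg ((hw i).2.1 x) (by positivity)).symm

/-- **Consequences of membership in `A_{(1,…,1)}`.**  If `w⃗ ∈ A_{(1,…,1)}` then
`ν_{w⃗} = ∏ wᵢ^{1/m} ∈ A₁` and `wᵢ^{1/m} ∈ A₁` for every `i`. -/
theorem A11_consequences {n m : ℕ} (hn : 0 < n) (hm : 0 < m)
    (w : Fin m → ESp n → ℝ) (hw : ∀ i, IsWeight (w i)) (h : A11 w) :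
    IsA1 (fun x => ∏ i, w i x ^ ((m : ℝ)⁻¹)) ∧
      ∀ i, IsA1 (fun x => w i x ^ ((m : ℝ)⁻¹)) := by
  obtain ⟨C, hC, h⟩ := h
  have hs : (0 : ℝ) ≤ (m : ℝ)⁻¹ := by positivity
  have hC' : C ^ ((m : ℝ)⁻¹) < ⊤ := ENNReal.rpow_lt_top_of_nonneg hs hC.ne
  refine ⟨⟨_, hC', fun Q hQ => ?_⟩, fun i => ⟨_, hC', fun Q hQ => ?_⟩⟩
  · obtain ⟨-, hk⟩ := key hm w hw C hC Q hQ (h Q hQ)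
    refine hk.trans ?_
    gcongr
    refine le_essInf_of_ae_le _ ?_
    have h1 : ∀ᵐ x ∂(volume.restrict Q), ∀ i,
        essInf (fun x => ENNReal.ofReal (w i x)) (volume.restrict Q) ≤ ENNReal.ofReal (w i x) :=
      ae_all_iff.2 fun i => ae_essInf_le
    filter_upwards [h1] with x hx
    rw [ofReal_prod_eq w hw]
    exact Finset.prod_le_prod' fun i _ => ENNReal.rpow_le_rpow (hx i) hs
  · obtain ⟨he, hk⟩ := key hm w hw C hC Q hQ (h Q hQ)
    have h1 : ∀ᵐ x ∂(volume.restrict Q), ∀ i,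
        essInf (fun x => ENNReal.ofReal (w i x)) (volume.restrict Q) ≤ ENNReal.ofReal (w i x) :=
      ae_all_iff.2 fun i => ae_essInf_le
    set e : Fin m → ℝ≥0∞ := fun i => essInf (fun x => ENNReal.ofReal (w i x)) (volume.restrict Q)
    change ∀ i, e i ≠ 0 ∧ e i ≠ ⊤ at he
    change ∀ᵐ x ∂(volume.restrict Q), ∀ i, e i ≤ ENNReal.ofReal (w i x) at h1
    change _ ≤ C ^ ((m : ℝ)⁻¹) * ∏ i, e i ^ ((m : ℝ)⁻¹) at hk
    set P := ∏ j ∈ Finset.univ.erase i, e j ^ ((m : ℝ)⁻¹) with hP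
    have hP0 : P ≠ 0 := by
      rw [hP, Finset.prod_ne_zero_iff]
      intro j _
      exact (ENNReal.rpow_pos (pos_iff_ne_zero.2 (he j).1) (he j).2).ne'
    have hPt : P ≠ ⊤ :=
      ENNReal.prod_ne_top fun j _ => ENNReal.rpow_ne_top_of_nonneg hs (he j).2
    have h2 : (volume Q)⁻¹ * wMeas (fun x => w i x ^ ((m : ℝ)⁻¹)) Q * P ≤
        C ^ ((m : ℝ)⁻¹) * e i ^ ((m : ℝ)⁻¹) * P := by
      rw [mul_assoc _ _ P, mul_assoc _ _ P, hP,
        Finset.mul_prod_erase _ (fun j => e j ^ ((m : ℝ)⁻¹)) (Finset.mem_univ i)]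
      refine le_trans ?_ hk
      gcongr
      rw [wMeas, ← hP, ← lintegral_mul_const' _ _ hPt]
      refine lintegral_mono_ae ?_
      filter_upwards [h1] with x hx
      rw [ofReal_prod_eq w hw, ← Finset.mul_prod_erase _ _ (Finset.mem_univ i),
        ENNReal.ofReal_rpow_of_nonneg ((hw i).2.1 x) hs]
      gcongr
      exact Finset.prod_le_prod' fun j _ => ENNReal.rpow_le_rpow (hx j) hs
    refine ((ENNReal.mul_le_mul_iff_left hP0 hPt).1 h2).trans ?_
    gcongr
    refine le_essInf_of_ae_le _ ?_
    filter_upwards [h1] with x hx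
    rw [← ENNReal.ofReal_rpow_of_nonneg ((hw i).2.1 x) hs]
    exact ENNReal.rpow_le_rpow (hx i) hs

end
end
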